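/- There exist universal constants C₆ and C₇ such that the following holds. Let r ∈ [1, ∞), let X be a log-concave random vector in ℝⁿ, set d_i := (E X_i²)^{1/2} and d := (Σ_{i=1}^n d_i^r)^{1/r}, let K ⊂ ℝⁿ be a convex set and A := {X ∈ K} with 0 < P(A) ≤ 1/e. Then for every t ≥ r, Σ_{i=1}^n E[|X_i|^r · 1_{A ∩ {X_i ≥ t·d_i}}] ≤ C₆^r · P(A) · ( r^r · σ_{r,X}(−log P(A))^r + (d·t)^r · e^{−t/C₇} ). -/

import Mathlib

/-!
Let `μ` be the law of `X`, `q = μ(K) = P(A)`, `p = -log q ≥ 1`, and let `ν` be the conditional law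
of `X` given `A`. Then `ν` is log-concave and has density at most `exp p` with respect to `μ`. With
`d i` the `L²`-norm of the `i`-th coordinate under `μ` and `s i` its first absolute moment under
`ν`, Borell's lemma (`LC1.tail`) gives coordinates under `ν` exponential tails on the scale `s i`.
The left-hand side is `q` times a sum of truncated `r`-th moments under `ν`.

* If `s i ≤ C * d i`, the truncation at `t * d i` makes the `i`-th term at most
  `(c * C * d i * t) ^ r * exp (-t / (32 * C))` (`IsLogConcave.cut_light`).
* The other coordinates form a set `I`, and their terms are at most `(c * r * s i) ^ r`
  (`IsLogConcave.cut_heavy`). It remains to bound the `ℓ_r`-norm of `(s i)` over `I` by the weak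
  moment of order `p` (`exists_dual`).

For the last point let `x i = y i / s i` and `w i` proportional to `s i ^ r`. It suffices to find
signs `θ` with `ν(∑ w i * θ i * x i ≥ 1/4) > exp (-L * p)`: then this event has `μ`-probability at
least `exp (-(1 + L) * p)`, Markov's inequality bounds the `p`-th moment below, and the functional
`∑ w i * θ i * x i` is, up to the factor `‖s‖_r`, admissible in the supremum.

Such signs exist by the following second-moment argument (`exists_signs`). Under `ν` the `x i` have
first moment one and, by log-concavity, are rarely close to zero, whereas under `μ` they are small
with probability close to one. Choose `k ≈ B * p` indices independently with law `w` and split the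
set `W` of typical points according to the sign pattern of the chosen coordinates.

* By midpoint log-concavity, `μ(cell) * μ(flat) ≤ μ(orthant) ^ 2`, where `flat` is the set on which
  all chosen coordinates are small. Orthants being disjoint, summation over sign patterns and the
  density bound give `∑ √(ν(cell) * μ(flat)) ≤ exp (p / 2)` (`sum_sqrt_le`).
* The average of `μ(flat) * ∑ ν(cell)` is at least a constant times `(1 - η / 6) ^ k`
  (`le_sum_flat`).
* If no choice of signs worked, the average of `∑ ν(cell) ^ 2` would be at most
  `(1 - η) ^ k + exp (-L * p)` (`sum_sq_le`).

The inequality `3 * τ * q - 4 * τ ^ 3 * q ^ 2 ≤ √q` (`cubic_le_sqrt`) makes these three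
incompatible for suitable `B`, `L` and `τ` (`tuple_numeric`).

As `K` is an arbitrary convex set, its null-measurability for `μ` has to be shown too; this is
`IsLogConcave.nullMeasurableSet_of_convex`.
-/

open MeasureTheory
open scoped Pointwise ENNReal ProbabilityTheory Classical

/-- A measure on a real topological vector space is log-concave if
`μ(λK + (1−λ)L) ≥ μ(K)^λ μ(L)^{1−λ}` for all compact nonempty `K, L` and `λ ∈ [0,1]`. -/
def IsLogConcave {E : Type*} [AddCommGroup E] [Module ℝ E] [TopologicalSpace E]
    [MeasurableSpace E] (μ : Measure E) : Prop :=
  ∀ K L : Set E, K.Nonempty → L.Nonempty → IsCompact K → IsCompact L →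
    ∀ l : ℝ, 0 ≤ l → l ≤ 1 →
      μ K ^ l * μ L ^ (1 - l) ≤ μ (l • K + (1 - l) • L)

/-- The `ℓ_r` norm on `ℝⁿ`: `‖x‖_r = (∑ |x i|^r)^{1/r}`. -/
noncomputable def lrNorm (r : ℝ) {n : ℕ} (x : Fin n → ℝ) : ℝ :=
  (∑ i, |x i| ^ r) ^ (1 / r)

/-- The weak `p`-th moment `σ_{r,X}(p) = sup { (E|∑ tᵢXᵢ|^p)^{1/p} : ‖t‖_{r'} ≤ 1 }`, where the
condition `‖t‖_{r'} ≤ 1` on the Hölder-dual norm is expressed by duality as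
`|∑ tᵢxᵢ| ≤ ‖x‖_r` for all `x` (this covers `r' = ∞` when `r = 1`). -/
noncomputable def sigmaR (r : ℝ) {n : ℕ} {Ω : Type*} [MeasureSpace Ω]
    (X : Ω → Fin n → ℝ) (p : ℝ) : ℝ :=
  ⨆ t : {t : Fin n → ℝ // ∀ x : Fin n → ℝ, |∑ i, t i * x i| ≤ lrNorm r x},
    (∫ ω, |∑ i, t.1 i * X ω i| ^ p) ^ (1 / p)

/-! ### Null-measurability of convex sets -/

lemma exists_compact_rpow_lt {E : Type*} [NormedAddCommGroup E] [NormedSpace ℝ E]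
    [FiniteDimensional ℝ E] [MeasurableSpace E] [BorelSpace E] {μ : Measure E} [IsFiniteMeasure μ]
    {B : Set E} (hB : NullMeasurableSet B μ) {l : ℝ} (hl : 0 < l) {a : ℝ≥0∞} (ha : a < μ B ^ l) :
    ∃ B' ⊆ B, IsCompact B' ∧ a < μ B' ^ l := by
  have : ProperSpace E := FiniteDimensional.proper ℝ E
  obtain ⟨B₁, hB₁, hm, hae⟩ := hB.exists_measurable_subset_ae_eq
  have hl' : l = (l⁻¹)⁻¹ := by simp
  rw [← measure_congr hae, hl', ENNReal.lt_rpow_inv_iff (by positivity)] at ha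
  obtain ⟨B', h1, h2, h3⟩ := hm.exists_lt_isCompact ha
  refine ⟨B', h1.trans hB₁, h2, ?_⟩
  rw [hl', ENNReal.lt_rpow_inv_iff (by positivity)]
  exact h3

/-- The log-concavity inequality passes from compact sets to null-measurable ones by inner
regularity. -/
lemma IsLogConcave.nullMeasurable {E : Type*} [NormedAddCommGroup E] [NormedSpace ℝ E]
    [FiniteDimensional ℝ E] [MeasurableSpace E] [BorelSpace E] {μ : Measure E} [IsFiniteMeasure μ]
    (h : IsLogConcave μ) {B C D : Set E} (hB : NullMeasurableSet B μ)
    (hC : NullMeasurableSet C μ) {l : ℝ} (h0 : 0 < l) (h1 : l < 1)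
    (hD : ∀ x ∈ B, ∀ y ∈ C, l • x + (1 - l) • y ∈ D) :
    μ B ^ l * μ C ^ (1 - l) ≤ μ D := by
  refine ENNReal.mul_le_of_forall_lt fun a ha b hb => ?_
  obtain ⟨B', hBB, hBc, hB'⟩ := exists_compact_rpow_lt hB h0 ha
  obtain ⟨C', hCC, hCc, hC'⟩ := exists_compact_rpow_lt hC (sub_pos.2 h1) hb
  have hBn : B'.Nonempty := by
    rw [Set.nonempty_iff_ne_empty]; rintro rfl; simp [h0] at hB'
  have hCn : C'.Nonempty := by
    rw [Set.nonempty_iff_ne_empty]; rintro rfl; simp [h1] at hC'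
  calc a * b ≤ μ B' ^ l * μ C' ^ (1 - l) := by gcongr
    _ ≤ μ (l • B' + (1 - l) • C') := h B' C' hBn hCn hBc hCc l h0.le h1.le
    _ ≤ μ D := by
      apply measure_mono
      rintro _ ⟨_, ⟨x, hx, rfl⟩, _, ⟨y, hy, rfl⟩, rfl⟩
      exact hD x (hBB hx) y (hCC hy)

/-- If `C` carries mass and every open segment from `B` to `C` avoids `B`, then `B` is null. For
compact `B` and `C`, log-concavity makes the mass of `(1 - l)B + lC` at least nearly `μ B` as
`l → 0`, although these sets lie outside `B` and shrink towards it. -/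
lemma IsLogConcave.eq_zero_of_combo_disjoint {E : Type*} [NormedAddCommGroup E] [NormedSpace ℝ E]
    [FiniteDimensional ℝ E] [MeasurableSpace E] [BorelSpace E] {μ : Measure E} [IsFiniteMeasure μ]
    (h : IsLogConcave μ) {B C : Set E} (hB : MeasurableSet B) (hC : MeasurableSet C)
    (hCpos : μ C ≠ 0)
    (hd : ∀ x ∈ B, ∀ y ∈ C, ∀ l : ℝ, 0 < l → l < 1 → (1 - l) • x + l • y ∉ B) : μ B = 0 := by
  have : ProperSpace E := FiniteDimensional.proper ℝ E
  by_contra hBpos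
  obtain ⟨B', hBB, hBc, hB'⟩ := hB.exists_lt_isCompact (pos_iff_ne_zero.2 hBpos)
  obtain ⟨C', hCC, hCc, hC'⟩ := hC.exists_lt_isCompact (pos_iff_ne_zero.2 hCpos)
  obtain ⟨R, hR⟩ := (hBc.union hCc).isBounded.exists_norm_le
  have hBn : B'.Nonempty := by
    rw [Set.nonempty_iff_ne_empty]; rintro rfl; simp at hB'
  have hCn : C'.Nonempty := by
    rw [Set.nonempty_iff_ne_empty]; rintro rfl; simp at hC'
  -- for `l → 0⁺` the combination lies in a small neighbourhood of `B'`, outside `B'`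
  have key : ∀ l : ℝ, 0 < l → l < 1 →
      μ.real B' ^ (1 - l) * μ.real C' ^ l ≤
        μ.real (Metric.cthickening (l * (2 * R)) B') - μ.real B' := by
    intro l h0 h1
    have hsub : ∀ x ∈ B', ∀ y ∈ C',
        (1 - l) • x + (1 - (1 - l)) • y ∈ Metric.cthickening (l * (2 * R)) B' \ B' := by
      intro x hx y hy
      have h2 : (1 - (1 - l)) = l := by ring
      rw [h2]
      refine ⟨Metric.mem_cthickening_of_dist_le _ x _ _ hx ?_, fun hh =>
        hd x (hBB hx) y (hCC hy) l h0 h1 (hBB hh)⟩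
      rw [dist_eq_norm]
      have : (1 - l) • x + l • y - x = l • (y - x) := by module
      rw [this, norm_smul, Real.norm_of_nonneg h0.le]
      gcongr
      calc ‖y - x‖ ≤ ‖y‖ + ‖x‖ := norm_sub_le _ _
        _ ≤ 2 * R := by
          have := hR x (Or.inl hx); have := hR y (Or.inr hy); linarith
    have := h.nullMeasurable hBc.measurableSet.nullMeasurableSet
      hCc.measurableSet.nullMeasurableSet (l := 1 - l) (by linarith) (by linarith) hsub
    have := ENNReal.toReal_mono (measure_ne_top _ _) this
    rw [ENNReal.toReal_mul, ← ENNReal.toReal_rpow, ← ENNReal.toReal_rpow] at this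
    simp only [sub_sub_cancel] at this
    refine this.trans (le_of_eq ?_)
    change μ.real _ = _
    rw [measureReal_sdiff (Metric.self_subset_cthickening _) hBc.measurableSet]
  have hb : 0 < μ.real B' := ENNReal.toReal_pos hB'.ne' (measure_ne_top _ _)
  have hc : 0 < μ.real C' := ENNReal.toReal_pos hC'.ne' (measure_ne_top _ _)
  have t1 : Filter.Tendsto (fun l : ℝ => μ.real B' ^ (1 - l) * μ.real C' ^ l)
      (nhdsWithin 0 (Set.Ioi 0)) (nhds (μ.real B')) := by
    have : ContinuousAt (fun l : ℝ => μ.real B' ^ (1 - l) * μ.real C' ^ l) 0 := by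
      refine ContinuousAt.mul ?_ ?_
      · exact ContinuousAt.rpow (by fun_prop) (by fun_prop) (Or.inl hb.ne')
      · exact ContinuousAt.rpow (by fun_prop) (by fun_prop) (Or.inl hc.ne')
    have h2 := this.tendsto
    simp only [sub_zero, Real.rpow_one, Real.rpow_zero, mul_one] at h2
    exact h2.mono_left nhdsWithin_le_nhds
  have t2 : Filter.Tendsto
      (fun l : ℝ => μ.real (Metric.cthickening (l * (2 * R)) B') - μ.real B')
      (nhdsWithin 0 (Set.Ioi 0)) (nhds 0) := by
    have e1 := tendsto_measure_cthickening_of_isCompact (μ := μ) hBc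
    have e2 : Filter.Tendsto (fun l : ℝ => l * (2 * R)) (nhdsWithin 0 (Set.Ioi 0)) (nhds 0) := by
      have : ContinuousAt (fun l : ℝ => l * (2 * R)) 0 := by fun_prop
      have h2 := this.tendsto
      simp only [zero_mul] at h2
      exact h2.mono_left nhdsWithin_le_nhds
    have e3 := (ENNReal.tendsto_toReal (measure_ne_top μ B')).comp (e1.comp e2)
    have e4 := e3.sub_const (μ.real B')
    have : (μ B').toReal - μ.real B' = 0 := sub_self _
    rw [this] at e4
    exact e4
  have hle : μ.real B' ≤ 0 := by
    refine le_of_tendsto_of_tendsto t1 t2 ?_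
    filter_upwards [Ioo_mem_nhdsGT (show (0 : ℝ) < 1 by norm_num)] with l hl
    exact key l hl.1 hl.2
  linarith

/-- Small balls around two points of the support have positive mass, so by log-concavity balls
around the points between them do too. -/
lemma IsLogConcave.convex_support {E : Type*} [NormedAddCommGroup E] [NormedSpace ℝ E]
    [FiniteDimensional ℝ E] [MeasurableSpace E] [BorelSpace E] {μ : Measure E} [IsFiniteMeasure μ]
    (h : IsLogConcave μ) : Convex ℝ μ.support := by
  rw [convex_iff_forall_pos]
  intro x hx y hy a b ha hb hab
  rw [Measure.mem_support_iff_forall] at hx hy ⊢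
  intro U hU
  obtain ⟨ε, hε, hεU⟩ := Metric.mem_nhds_iff.1 hU
  have hb' : b = 1 - a := by linarith
  have := h.nullMeasurable (D := U) (measurableSet_ball (x := x) (ε := ε)).nullMeasurableSet
    (measurableSet_ball (x := y) (ε := ε)).nullMeasurableSet ha (by linarith) (by
      intro x' hx' y' hy'
      apply hεU
      rw [Metric.mem_ball, dist_eq_norm] at *
      rw [← hb']
      have e : a • x' + b • y' - (a • x + b • y) = a • (x' - x) + b • (y' - y) := by module
      rw [e]
      calc _ ≤ ‖a • (x' - x)‖ + ‖b • (y' - y)‖ := norm_add_le _ _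
        _ = a * ‖x' - x‖ + b * ‖y' - y‖ := by
          rw [norm_smul, norm_smul, Real.norm_of_nonneg ha.le, Real.norm_of_nonneg hb.le]
        _ < a * ε + b * ε := by gcongr
        _ = ε := by rw [← add_mul, hab, one_mul])
  refine lt_of_lt_of_le ?_ this
  have p1 := hx _ (Metric.ball_mem_nhds x hε)
  have p2 := hy _ (Metric.ball_mem_nhds y hε)
  have q1 := ENNReal.rpow_pos (p := a) p1 (measure_ne_top _ _)
  have q2 := ENNReal.rpow_pos (p := 1 - a) p2 (measure_ne_top _ _)
  exact ENNReal.mul_pos q1.ne' q2.ne'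

/-- A convex set is null-measurable for every finite log-concave measure. The proof is by
induction on the dimension: if the interior of `K` carries mass, then the frontier is null; if not,
separating the support from the interior shows that up to a null set `K` lies in a hyperplane. -/
theorem IsLogConcave.nullMeasurableSet_of_convex (d : ℕ) :
    ∀ (E : Type) [NormedAddCommGroup E] [NormedSpace ℝ E] [FiniteDimensional ℝ E]
      [MeasurableSpace E] [BorelSpace E] (μ : Measure E) [IsFiniteMeasure μ],
      IsLogConcave μ → ∀ K : Set E, Convex ℝ K → Module.finrank ℝ E = d →
      NullMeasurableSet K μ := by
  induction d using Nat.strong_induction_on with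
  | _ d ih =>
  intro E _ _ _ _ _ μ _ h K hK hd
  have : ProperSpace E := FiniteDimensional.proper ℝ E
  -- sets lying in a proper affine subspace are handled by the induction hypothesis
  have red : ∀ (V : Submodule ℝ E), V ≠ ⊤ → ∀ (x₀ : E) (K' : Set E), Convex ℝ K' →
      (∀ x ∈ K', x - x₀ ∈ V) → NullMeasurableSet K' μ := by
    intro V hV x₀ K' hK' hsub
    let ι : V → E := fun v => x₀ + v
    have hι : Topology.IsClosedEmbedding ι :=
      (Homeomorph.addLeft x₀).isClosedEmbedding.comp
        (Submodule.closed_of_finiteDimensional V).isClosedEmbedding_subtypeVal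
    have hιm : MeasurableEmbedding ι := hι.measurableEmbedding
    have hlc : IsLogConcave (μ.comap ι) := by
      intro B C hBn hCn hBc hCc l h0 h1
      rw [hιm.comap_apply, hιm.comap_apply, hιm.comap_apply]
      refine (h _ _ (hBn.image ι) (hCn.image ι) (hBc.image hι.continuous)
        (hCc.image hι.continuous) l h0 h1).trans (measure_mono ?_)
      rintro _ ⟨_, ⟨_, ⟨x, hx, rfl⟩, rfl⟩, _, ⟨_, ⟨y, hy, rfl⟩, rfl⟩, rfl⟩
      refine ⟨l • x + (1 - l) • y, Set.add_mem_add (Set.smul_mem_smul_set hx)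
        (Set.smul_mem_smul_set hy), ?_⟩
      simp only [ι, Submodule.coe_add, Submodule.coe_smul]
      module
    have hfin : IsFiniteMeasure (μ.comap ι) := ⟨by
      rw [hιm.comap_apply]; exact measure_lt_top _ _⟩
    have hconv : Convex ℝ (ι ⁻¹' K') := by
      intro x hx y hy a b ha hb hab
      have := hK' hx hy ha hb hab
      have e : a • ι x + b • ι y = ι (a • x + b • y) := by
        simp only [ι, Submodule.coe_add, Submodule.coe_smul]
        have : x₀ = a • x₀ + b • x₀ := by rw [← add_smul, hab, one_smul]
        nth_rewrite 3 [this]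
        module
      rw [e] at this
      exact this
    have hn := ih _ (hd ▸ Submodule.finrank_lt hV) V (μ.comap ι) hlc _ hconv rfl
    have him : ι '' (ι ⁻¹' K') = K' := by
      rw [Set.image_preimage_eq_inter_range, Set.inter_eq_left]
      intro x hx
      exact ⟨⟨x - x₀, hsub x hx⟩, by simp [ι]⟩
    obtain ⟨T, hT, hTm, hTae⟩ := hn.exists_measurable_superset_ae_eq
    rw [← him]
    refine NullMeasurableSet.congr (hιm.measurableSet_image.2 hTm).nullMeasurableSet
      (s := ι '' T) ?_
    have h1 : (μ.comap ι) (T \ (ι ⁻¹' K')) = 0 := (ae_le_set.1 hTae.le)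
    rw [hιm.comap_apply, Set.image_sdiff hιm.injective] at h1
    exact Filter.EventuallyLE.antisymm (ae_le_set.2 h1) (Set.image_mono hT).eventuallyLE
  rcases (interior K).eq_empty_or_nonempty with hint | ⟨z, hz⟩
  · rcases K.eq_empty_or_nonempty with rfl | ⟨x₀, hx₀⟩
    · exact MeasurableSet.empty.nullMeasurableSet
    refine red (vectorSpan ℝ K) ?_ x₀ K hK fun x hx => vsub_mem_vectorSpan ℝ hx hx₀
    intro htop
    have h1 : affineSpan ℝ K = ⊤ := by
      rw [AffineSubspace.affineSpan_eq_top_iff_vectorSpan_eq_top_of_nonempty ℝ E E ⟨x₀, hx₀⟩]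
      exact htop
    rw [← Convex.interior_nonempty_iff_affineSpan_eq_top hK, hint] at h1
    exact Set.not_nonempty_empty h1
  by_cases hμ : μ (interior K) = 0
  · -- the support lies on one side of a hyperplane and the interior on the other
    have hdisj : Disjoint (interior K) μ.support :=
      Set.disjoint_left.2 fun x hx hs => by
        rw [Measure.mem_support_iff_forall] at hs
        exact (hs _ (isOpen_interior.mem_nhds hx)).ne' hμ
    obtain ⟨f, u, hf1, hf2⟩ := geometric_hahn_banach_open hK.interior isOpen_interior
      h.convex_support hdisj
    have hcl : ∀ x ∈ K, f x ≤ u := by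
      intro x hx
      have hx' : x ∈ closure (interior K) := by
        rw [hK.closure_interior_eq_closure_of_nonempty_interior ⟨z, hz⟩]
        exact subset_closure hx
      exact closure_minimal (fun y hy => (hf1 y hy).le)
        (isClosed_le f.continuous continuous_const) hx'
    have hae : (K ∩ {x | f x = u} : Set E) =ᵐ[μ] K := by
      filter_upwards [Measure.support_mem_ae (μ := μ)] with x hx
      apply propext
      refine ⟨fun hh => hh.1, fun hh => ⟨hh, le_antisymm (hcl x hh) (hf2 x hx)⟩⟩
    refine NullMeasurableSet.congr ?_ hae
    rcases (K ∩ {x | f x = u}).eq_empty_or_nonempty with he | ⟨x₀, hx₀⟩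
    · rw [he]; exact MeasurableSet.empty.nullMeasurableSet
    refine red (LinearMap.ker (f : E →ₗ[ℝ] ℝ)) ?_ x₀ _ ?_ ?_
    · intro htop
      have e1 : f x₀ = 0 := by
        have : x₀ ∈ LinearMap.ker (f : E →ₗ[ℝ] ℝ) := htop ▸ Submodule.mem_top
        simpa using this
      have e2 : f z = 0 := by
        have : z ∈ LinearMap.ker (f : E →ₗ[ℝ] ℝ) := htop ▸ Submodule.mem_top
        simpa using this
      have e3 := hf1 z hz
      have e4 : f x₀ = u := hx₀.2
      linarith
    · exact hK.inter (convex_hyperplane (f : E →ₗ[ℝ] ℝ).isLinear u)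
    · intro x hx
      have e4 : f x₀ = u := hx₀.2
      have e5 : f x = u := hx.2
      simp [e4, e5]
  · have hfr : μ (frontier K) = 0 := by
      refine h.eq_zero_of_combo_disjoint isClosed_frontier.measurableSet
        isOpen_interior.measurableSet hμ ?_
      intro x hx y hy l h0 h1 hmem
      have := hK.combo_closure_interior_subset_interior (a := 1 - l) (b := l) (by linarith) h0
        (by ring) (Set.add_mem_add (Set.smul_mem_smul_set (frontier_subset_closure hx))
          (Set.smul_mem_smul_set hy))
      exact hmem.2 this
    refine NullMeasurableSet.congr isOpen_interior.measurableSet.nullMeasurableSet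
      (s := interior K) ?_
    refine Filter.EventuallyLE.antisymm interior_subset.eventuallyLE (ae_le_set.2 ?_)
    exact measure_mono_null (Set.sdiff_subset_sdiff_left subset_closure) hfr

/-! ### Conditioning, marginals and moments on the line -/

/-- Conditioning on a convex set preserves log-concavity. -/
lemma IsLogConcave.cond {E : Type*} [NormedAddCommGroup E] [NormedSpace ℝ E]
    [FiniteDimensional ℝ E] [MeasurableSpace E] [BorelSpace E] {μ : Measure E}
    [IsProbabilityMeasure μ] (h : IsLogConcave μ) {K : Set E} (hK : Convex ℝ K)
    (hKm : NullMeasurableSet K μ) (h0 : μ K ≠ 0) : IsLogConcave (μ[|K]) := by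
  have hr : IsLogConcave (μ.restrict K) := by
    intro B C hBn hCn hBc hCc l h0 h1
    rw [Measure.restrict_apply₀' hKm, Measure.restrict_apply₀' hKm, Measure.restrict_apply₀' hKm]
    rcases h0.eq_or_lt with rfl | h0
    · simp [Set.zero_smul_set hBn]
    rcases h1.eq_or_lt with rfl | h1
    · simp [Set.zero_smul_set hCn]
    refine h.nullMeasurable (hBc.measurableSet.nullMeasurableSet.inter hKm)
      (hCc.measurableSet.nullMeasurableSet.inter hKm) h0 h1 ?_
    rintro x ⟨hx, hxK⟩ y ⟨hy, hyK⟩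
    exact ⟨Set.add_mem_add (Set.smul_mem_smul_set hx) (Set.smul_mem_smul_set hy),
      hK hxK hyK h0.le (by linarith) (by ring)⟩
  intro B C hBn hCn hBc hCc l h0 h1
  have hc : (μ K)⁻¹ = ((μ K)⁻¹) ^ l * ((μ K)⁻¹) ^ (1 - l) := by
    rw [← ENNReal.rpow_add _ _ (ENNReal.inv_ne_zero.2 (measure_ne_top _ _))
      (ENNReal.inv_ne_top.2 ‹_›)]
    simp
  have := hr B C hBn hCn hBc hCc l h0 h1
  simp only [ProbabilityTheory.cond, Measure.smul_apply, smul_eq_mul]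
  rw [ENNReal.mul_rpow_of_nonneg _ _ h0, ENNReal.mul_rpow_of_nonneg _ _ (sub_nonneg.2 h1)]
  calc _ = (((μ K)⁻¹) ^ l * ((μ K)⁻¹) ^ (1 - l)) *
        (μ.restrict K B ^ l * μ.restrict K C ^ (1 - l)) := by ring
    _ ≤ (μ K)⁻¹ * μ.restrict K (l • B + (1 - l) • C) := by rw [← hc]; gcongr

/-- Log-concavity of a measure on the line, tested on Borel sets. The set `D` replaces the
Minkowski combination, which need not be Borel. -/
def LC1 (ρ : Measure ℝ) : Prop :=
  ∀ B C D : Set ℝ, MeasurableSet B → MeasurableSet C → ∀ l : ℝ, 0 < l → l < 1 →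
    (∀ x ∈ B, ∀ y ∈ C, l * x + (1 - l) * y ∈ D) → MeasurableSet D →
      ρ.real B ^ l * ρ.real C ^ (1 - l) ≤ ρ.real D

lemma IsLogConcave.real {E : Type*} [NormedAddCommGroup E] [NormedSpace ℝ E]
    [FiniteDimensional ℝ E] [MeasurableSpace E] [BorelSpace E] {μ : Measure E} [IsFiniteMeasure μ]
    (h : IsLogConcave μ) {B C D : Set E} (hB : MeasurableSet B)
    (hC : MeasurableSet C) {l : ℝ} (h0 : 0 < l) (h1 : l < 1)
    (hD : ∀ x ∈ B, ∀ y ∈ C, l • x + (1 - l) • y ∈ D) :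
    μ.real B ^ l * μ.real C ^ (1 - l) ≤ μ.real D := by
  have := ENNReal.toReal_mono (measure_ne_top _ _)
    (h.nullMeasurable hB.nullMeasurableSet hC.nullMeasurableSet h0 h1 hD)
  rwa [ENNReal.toReal_mul, ← ENNReal.toReal_rpow, ← ENNReal.toReal_rpow] at this

lemma IsLogConcave.marginal {n : ℕ} {μ : Measure (Fin n → ℝ)} [IsFiniteMeasure μ]
    (h : IsLogConcave μ) (i : Fin n) : LC1 (μ.map (fun x => x i)) := by
  intro B C D hB hC l h0 h1 hD hDm
  have hm : Measurable (fun x : Fin n → ℝ => x i) := measurable_pi_apply i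
  rw [map_measureReal_apply hm hB, map_measureReal_apply hm hC, map_measureReal_apply hm hDm]
  exact h.real (hm hB) (hm hC) h0 h1 fun x hx y hy => hD _ hx _ hy

/-- Borell's lemma: a symmetric interval of mass at least `3/4` forces exponential tails. -/
lemma LC1.tail {ρ : Measure ℝ} [IsProbabilityMeasure ρ] (h : LC1 ρ) {a : ℝ}
    (h4 : ρ.real {x | a ≤ |x|} ≤ 1 / 4) (u : ℝ) :
    ρ.real {x | u * a ≤ |x|} ≤ 2 * Real.exp (-u / 2) := by
  have hms : ∀ c : ℝ, MeasurableSet {x : ℝ | c ≤ |x|} := fun c =>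
    measurableSet_le measurable_const (by fun_prop)
  rcases le_or_gt u 1 with hu | hu
  · calc ρ.real {x | u * a ≤ |x|} ≤ 1 := measureReal_le_one
      _ ≤ 2 * Real.exp (-u / 2) := by
        have := Real.add_one_le_exp (-u / 2); linarith
  have hc : {x : ℝ | |x| < a} = {x | a ≤ |x|}ᶜ := by ext; simp
  have h34 : 3 / 4 ≤ ρ.real {x : ℝ | |x| < a} := by
    rw [hc, probReal_compl_eq_one_sub (hms a)]; linarith
  set l : ℝ := 2 / (u + 1) with hl
  have hu1 : 0 < u + 1 := by linarith
  have hl0 : 0 < l := by positivity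
  have hl1 : l < 1 := by rw [hl, div_lt_one hu1]; linarith
  have hlu : l * (u + 1) = 2 := by rw [hl]; field_simp
  have key := h {x | u * a ≤ |x|} {x | |x| < a} {x | a ≤ |x|} (hms _)
    (hc ▸ (hms a).compl) l hl0 hl1 (by
      intro x hx y hy
      simp only [Set.mem_ofPred_eq] at *
      have e1 : |l * x| ≤ |l * x + (1 - l) * y| + |(1 - l) * y| := by
        have := abs_sub (l * x + (1 - l) * y) ((1 - l) * y)
        simpa using this
      rw [abs_mul, abs_mul (1 - l), abs_of_pos hl0, abs_of_pos (sub_pos.2 hl1)] at e1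
      have e2 : l * (u * a) ≤ l * |x| := by gcongr
      have e3 : (1 - l) * |y| ≤ (1 - l) * a := by
        have := sub_pos.2 hl1
        gcongr
      have e4 : l * (u * a) - (1 - l) * a = a := by linear_combination a * hlu
      linarith) (hms a)
  set T := ρ.real {x | u * a ≤ |x|} with hT
  have hT0 : 0 ≤ T := measureReal_nonneg
  have h5 : (3 / 4 : ℝ) ≤ ρ.real {x : ℝ | |x| < a} ^ (1 - l) := by
    calc (3 / 4 : ℝ) = (3 / 4 : ℝ) ^ (1 : ℝ) := by simp
      _ ≤ (3 / 4 : ℝ) ^ (1 - l) :=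
        Real.rpow_le_rpow_of_exponent_ge (by norm_num) (by norm_num) (by linarith)
      _ ≤ _ := Real.rpow_le_rpow (by norm_num) h34 (by linarith)
  have h6 : T ^ l ≤ Real.exp (-1) := by
    have e1 : T ^ l * (3 / 4) ≤ 1 / 4 :=
      (mul_le_mul_of_nonneg_left h5 (by positivity)).trans (key.trans h4)
    have e2 : (1 / 3 : ℝ) ≤ Real.exp (-1) := by
      rw [Real.exp_neg, one_div]
      exact inv_anti₀ (Real.exp_pos _) (Real.exp_one_lt_d9.le.trans (by norm_num))
    linarith
  have h7 : T ≤ Real.exp (-1) ^ l⁻¹ := by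
    calc T = (T ^ l) ^ l⁻¹ := by rw [← Real.rpow_mul hT0, mul_inv_cancel₀ hl0.ne', Real.rpow_one]
      _ ≤ _ := Real.rpow_le_rpow (by positivity) h6 (by positivity)
  rw [← Real.exp_mul] at h7
  have h8 : Real.exp (-1 * l⁻¹) ≤ Real.exp (-u / 2) := by
    apply Real.exp_le_exp.2
    rw [hl, inv_div]; linarith
  have := Real.exp_pos (-u / 2)
  linarith

/-- A quantitative exponential moment for one-dimensional log-concave measures. -/
lemma LC1.exp_moment {ρ : Measure ℝ} [IsProbabilityMeasure ρ] (h : LC1 ρ) {a : ℝ} (ha : 0 < a)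
    (h4 : ρ.real {x | a ≤ |x|} ≤ 1 / 4) :
    Integrable (fun x => Real.exp (|x| / (4 * a))) ρ ∧
      ∫ x, Real.exp (|x| / (4 * a)) ∂ρ ≤ 3 := by
  have hf0 : 0 ≤ᵐ[ρ] fun x => |x| / (4 * a) := ae_of_all _ fun x => by
    simp only [Pi.zero_apply]; positivity
  have lc := lintegral_comp_eq_lintegral_meas_le_mul ρ hf0 (g := Real.exp)
    (by fun_prop) (fun t _ => Real.continuous_exp.intervalIntegrable _ _)
    (ae_of_all _ fun t => (Real.exp_pos t).le)
  simp only [integral_exp, Real.exp_zero] at lc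
  have hint : ∫⁻ x, ENNReal.ofReal (Real.exp (|x| / (4 * a)) - 1) ∂ρ ≤ 2 := by
    rw [lc]
    calc _ ≤ ∫⁻ t in Set.Ioi (0 : ℝ), ENNReal.ofReal (2 * Real.exp (-t)) := by
          refine lintegral_mono fun t => ?_
          have e1 : ρ {x | t ≤ |x| / (4 * a)} ≤ ENNReal.ofReal (2 * Real.exp (-(2 * t))) := by
            have := h.tail h4 (4 * t)
            have e2 : {x : ℝ | t ≤ |x| / (4 * a)} = {x | 4 * t * a ≤ |x|} := by
              ext x
              simp only [Set.mem_ofPred_eq]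
              rw [le_div_iff₀ (by positivity)]
              constructor <;> intro hh <;> linarith
            rw [e2, ← ofReal_measureReal]
            apply ENNReal.ofReal_le_ofReal
            convert this using 3
            ring
          calc _ ≤ ENNReal.ofReal (2 * Real.exp (-(2 * t))) * ENNReal.ofReal (Real.exp t) := by
                gcongr
            _ = _ := by
              rw [← ENNReal.ofReal_mul (by positivity), mul_assoc, ← Real.exp_add]
              congr 3; ring
      _ = ENNReal.ofReal (∫ t in Set.Ioi (0 : ℝ), 2 * Real.exp (-t)) := by
          rw [ofReal_integral_eq_lintegral_ofReal]
          · exact (integrableOn_exp_neg_Ioi 0).const_mul 2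
          · exact ae_of_all _ fun t => by simp only [Pi.zero_apply]; positivity
      _ = 2 := by
          rw [integral_const_mul, integral_exp_neg_Ioi_zero]; simp
  have hint3 : ∫⁻ x, ENNReal.ofReal (Real.exp (|x| / (4 * a))) ∂ρ ≤ 3 := by
    calc _ = ∫⁻ x, (ENNReal.ofReal (Real.exp (|x| / (4 * a)) - 1) + 1) ∂ρ := by
          refine lintegral_congr fun x => ?_
          have : 0 ≤ Real.exp (|x| / (4 * a)) - 1 := by
            have := Real.one_le_exp (show 0 ≤ |x| / (4 * a) by positivity); linarith
          rw [← ENNReal.ofReal_one, ← ENNReal.ofReal_add this zero_le_one]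
          simp
      _ = (∫⁻ x, ENNReal.ofReal (Real.exp (|x| / (4 * a)) - 1) ∂ρ) + 1 := by
          rw [lintegral_add_right _ measurable_const]; simp
      _ ≤ 2 + 1 := by gcongr
      _ = 3 := by norm_num
  have hm : AEStronglyMeasurable (fun x : ℝ => Real.exp (|x| / (4 * a))) ρ := by
    have : Continuous (fun x : ℝ => Real.exp (|x| / (4 * a))) := by fun_prop
    exact this.aestronglyMeasurable
  have hnn : 0 ≤ᵐ[ρ] fun x : ℝ => Real.exp (|x| / (4 * a)) :=
    ae_of_all _ fun x => (Real.exp_pos _).le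
  refine ⟨⟨hm, ?_⟩, ?_⟩
  · rw [hasFiniteIntegral_iff_ofReal hnn]
    exact hint3.trans_lt (by simp)
  · rw [integral_eq_lintegral_of_nonneg_ae hnn hm]
    exact ENNReal.toReal_le_of_le_ofReal (by norm_num) (by simpa using hint3)

/-- Every log-concave law on the line has some exponential moment. -/
lemma LC1.exists_exp_moment {ρ : Measure ℝ} [IsProbabilityMeasure ρ] (h : LC1 ρ) :
    ∃ b > 0, Integrable (fun x => Real.exp (|x| / b)) ρ ∧ ∫ x, Real.exp (|x| / b) ∂ρ ≤ 3 := by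
  have ht : Filter.Tendsto (fun k : ℕ => ρ.real {x : ℝ | (k : ℝ) ≤ |x|}) Filter.atTop
      (nhds 0) := by
    have h1 := tendsto_measure_iInter_atTop (μ := ρ) (s := fun k : ℕ => {x : ℝ | (k : ℝ) ≤ |x|})
      (fun k => (measurableSet_le measurable_const (by fun_prop)).nullMeasurableSet)
      (fun i j hij x hx => by
        have h1 : (i : ℝ) ≤ j := by exact_mod_cast hij
        exact h1.trans hx) ⟨0, measure_ne_top _ _⟩
    have h2 : ⋂ k : ℕ, {x : ℝ | (k : ℝ) ≤ |x|} = ∅ := by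
      ext x
      simp only [Set.mem_iInter, Set.mem_ofPred_eq, Set.mem_empty_iff_false, iff_false, not_forall,
        not_le]
      exact exists_nat_gt |x|
    rw [h2, measure_empty] at h1
    exact (ENNReal.tendsto_toReal ENNReal.zero_ne_top).comp h1
  obtain ⟨k, hk1, hk2⟩ := ((ht.eventually (gt_mem_nhds (show (0 : ℝ) < 1 / 4 by norm_num))).and
    (Filter.eventually_gt_atTop 0)).exists
  have hk : (0 : ℝ) < k := by exact_mod_cast hk2
  exact ⟨4 * k, by positivity, h.exp_moment hk hk1.le⟩

lemma rpow_le_exp {r b y : ℝ} (hr : 0 < r) (hb : 0 < b) (hy : 0 ≤ y) :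
    y ^ r ≤ (b * r) ^ r * Real.exp (y / b) := by
  have h1 : y / (b * r) ≤ Real.exp (y / (b * r)) := by
    have := Real.add_one_le_exp (y / (b * r)); linarith
  have h2 : y ≤ b * r * Real.exp (y / (b * r)) := by
    rw [div_le_iff₀ (by positivity)] at h1; linarith
  calc y ^ r ≤ (b * r * Real.exp (y / (b * r))) ^ r := Real.rpow_le_rpow hy h2 hr.le
    _ = (b * r) ^ r * Real.exp (y / b) := by
      rw [Real.mul_rpow (by positivity) (by positivity), ← Real.exp_mul]
      congr 2; field_simp

section moments
variable {ρ : Measure ℝ} {b : ℝ}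

lemma integrable_abs_rpow (hb : 0 < b) (hI : Integrable (fun x => Real.exp (|x| / b)) ρ)
    {q : ℝ} (hq : 0 < q) : Integrable (fun x => |x| ^ q) ρ := by
  refine (hI.const_mul ((b * q) ^ q)).mono'
    (Measurable.aestronglyMeasurable (by fun_prop)) (ae_of_all _ fun x => ?_)
  rw [Real.norm_of_nonneg (by positivity)]
  exact rpow_le_exp hq hb (abs_nonneg x)

lemma integral_abs_rpow_le (hb : 0 < b) (hI : Integrable (fun x => Real.exp (|x| / b)) ρ)
    (h3 : ∫ x, Real.exp (|x| / b) ∂ρ ≤ 3) {q : ℝ} (hq : 0 < q) :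
    ∫ x, |x| ^ q ∂ρ ≤ 3 * (b * q) ^ q := by
  calc ∫ x, |x| ^ q ∂ρ ≤ ∫ x, (b * q) ^ q * Real.exp (|x| / b) ∂ρ :=
        integral_mono (integrable_abs_rpow hb hI hq) (hI.const_mul _)
          fun x => rpow_le_exp hq hb (abs_nonneg x)
    _ = (b * q) ^ q * ∫ x, Real.exp (|x| / b) ∂ρ := integral_const_mul _ _
    _ ≤ (b * q) ^ q * 3 := by gcongr
    _ = _ := by ring

lemma integral_trunc_rpow_le (hb : 0 < b) (hI : Integrable (fun x => Real.exp (|x| / b)) ρ)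
    (h3 : ∫ x, Real.exp (|x| / b) ∂ρ ≤ 3) {q : ℝ} (hq : 0 < q) (T : ℝ) :
    ∫ x, Set.indicator {x | T ≤ x} (fun x => |x| ^ q) x ∂ρ ≤
      3 * (2 * b * q) ^ q * Real.exp (-T / (2 * b)) := by
  have hm : MeasurableSet {x : ℝ | T ≤ x} := measurableSet_Ici
  calc _ ≤ ∫ x, (2 * b * q) ^ q * Real.exp (-T / (2 * b)) * Real.exp (|x| / b) ∂ρ := by
        refine integral_mono ((integrable_abs_rpow hb hI hq).indicator hm) (hI.const_mul _)
          fun x => ?_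
        by_cases hx : T ≤ x
        · rw [Set.indicator_of_mem (by exact hx)]
          refine (rpow_le_exp hq (show 0 < 2 * b by positivity) (abs_nonneg x)).trans ?_
          rw [mul_assoc _ (Real.exp _), ← Real.exp_add]
          gcongr
          have : T ≤ |x| := hx.trans (le_abs_self x)
          rw [show |x| / b = |x| / (2 * b) + |x| / (2 * b) by field_simp; ring]
          have : T / (2 * b) ≤ |x| / (2 * b) := by gcongr
          rw [neg_div]; linarith
        · rw [Set.indicator_of_notMem (by exact hx)]
          positivity
    _ = (2 * b * q) ^ q * Real.exp (-T / (2 * b)) * ∫ x, Real.exp (|x| / b) ∂ρ :=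
        integral_const_mul _ _
    _ ≤ (2 * b * q) ^ q * Real.exp (-T / (2 * b)) * 3 := by gcongr
    _ = _ := by ring

end moments

lemma LC1.integrable_abs_rpow {ρ : Measure ℝ} [IsProbabilityMeasure ρ] (h : LC1 ρ) {q : ℝ}
    (hq : 0 < q) : Integrable (fun x => |x| ^ q) ρ := by
  obtain ⟨b, hb, h1, -⟩ := h.exists_exp_moment
  exact _root_.integrable_abs_rpow hb h1 hq

lemma LC1.integrable_abs {ρ : Measure ℝ} [IsProbabilityMeasure ρ] (h : LC1 ρ) :
    Integrable (fun x => |x|) ρ := by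
  simpa using h.integrable_abs_rpow one_pos

/-- The exponential moment at the scale of the first absolute moment (or any larger one). -/
lemma LC1.exp_moment_mean {ρ : Measure ℝ} [IsProbabilityMeasure ρ] (h : LC1 ρ) {s : ℝ}
    (hs : 0 < s) (hle : ∫ x, |x| ∂ρ ≤ s) :
    Integrable (fun x => Real.exp (|x| / (16 * s))) ρ ∧
      ∫ x, Real.exp (|x| / (16 * s)) ∂ρ ≤ 3 := by
  have := h.exp_moment (a := 4 * s) (by positivity) (by
    have := mul_meas_ge_le_integral_of_nonneg (ae_of_all _ fun x => abs_nonneg x)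
      h.integrable_abs (4 * s)
    have : 4 * s * ρ.real {x | 4 * s ≤ |x|} ≤ s := this.trans hle
    rw [le_div_iff₀ (by norm_num)]
    nlinarith)
  rwa [show 4 * (4 * s) = 16 * s by ring] at this

lemma LC1.second_moment {ρ : Measure ℝ} [IsProbabilityMeasure ρ] (h : LC1 ρ) {s : ℝ}
    (hs : 0 < s) (hle : ∫ x, |x| ∂ρ ≤ s) :
    Integrable (fun x => x ^ 2) ρ ∧ ∫ x, x ^ 2 ∂ρ ≤ 3072 * s ^ 2 := by
  obtain ⟨h1, h2⟩ := h.exp_moment_mean hs hle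
  have e1 := _root_.integrable_abs_rpow (by positivity) h1 (show (0 : ℝ) < 2 by norm_num)
  have e2 := integral_abs_rpow_le (by positivity) h1 h2 (show (0 : ℝ) < 2 by norm_num)
  simp only [Real.rpow_two, sq_abs] at e1 e2
  exact ⟨e1, e2.trans (le_of_eq (by ring))⟩

/-! ### Small-ball estimate -/

/-- A log-concave law on the line puts a definite mass, on one side of the origin, at distance
comparable with its first absolute moment `s`. -/
lemma LC1.exists_side {ρ : Measure ℝ} [IsProbabilityMeasure ρ] (h : LC1 ρ) {s : ℝ}
    (hs : 0 < s) (hle : ∫ x, |x| ∂ρ = s) :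
    ∃ e : ℝ, |e| = 1 ∧ 1 / 98304 ≤ ρ.real {x | s / 2 ≤ e * x ∧ e * x ≤ 12288 * s} := by
  obtain ⟨h2i, h2⟩ := h.second_moment hs hle.le
  set m := ρ.real {x | s / 2 ≤ |x| ∧ |x| ≤ 12288 * s} with hm
  have hms : MeasurableSet {x : ℝ | s / 2 ≤ |x| ∧ |x| ≤ 12288 * s} := by
    measurability
  have hii : Integrable ({x : ℝ | s / 2 ≤ |x| ∧ |x| ≤ 12288 * s}.indicator (fun _ => (1 : ℝ))) ρ :=
    (integrable_const 1).indicator hms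
  have hmi : ∫ x, {x : ℝ | s / 2 ≤ |x| ∧ |x| ≤ 12288 * s}.indicator (fun _ => (1 : ℝ)) x ∂ρ = m := by
    rw [integral_indicator hms]; simp [hm]
  have hi1 : Integrable (fun x => s / 2 + 12288 * s *
      {x : ℝ | s / 2 ≤ |x| ∧ |x| ≤ 12288 * s}.indicator (fun _ => (1 : ℝ)) x) ρ :=
    (integrable_const _).add (hii.const_mul _)
  have key : s ≤ s / 2 + 12288 * s * m + (3072 * s ^ 2) / (12288 * s) := by
    calc s = ∫ x, |x| ∂ρ := hle.symm
      _ ≤ ∫ x, (s / 2 + 12288 * s *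
            {x : ℝ | s / 2 ≤ |x| ∧ |x| ≤ 12288 * s}.indicator (fun _ => (1 : ℝ)) x +
            x ^ 2 / (12288 * s)) ∂ρ := by
          refine integral_mono h.integrable_abs
            (hi1.add (h2i.div_const _)) fun x => ?_
          have h0 : 0 ≤ x ^ 2 / (12288 * s) := by positivity
          rcases lt_or_ge |x| (s / 2) with h1 | h1
          · have : 0 ≤ {x : ℝ | s / 2 ≤ |x| ∧ |x| ≤ 12288 * s}.indicator (fun _ => (1 : ℝ)) x :=
              Set.indicator_nonneg (fun _ _ => zero_le_one) _
            have : 0 ≤ 12288 * s * {x : ℝ | s / 2 ≤ |x| ∧ |x| ≤ 12288 * s}.indicator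
              (fun _ => (1 : ℝ)) x := by positivity
            simp only
            linarith
          rcases le_or_gt |x| (12288 * s) with h3 | h3
          · simp only
            rw [Set.indicator_of_mem (by exact ⟨h1, h3⟩)]
            linarith
          · simp only
            rw [Set.indicator_of_notMem (by rintro ⟨-, h4⟩; linarith)]
            have : |x| ≤ x ^ 2 / (12288 * s) := by
              rw [le_div_iff₀ (by positivity), ← sq_abs]
              nlinarith [abs_nonneg x]
            linarith
      _ = s / 2 + 12288 * s * m + (∫ x, x ^ 2 ∂ρ) / (12288 * s) := by
          rw [integral_add hi1 (h2i.div_const _),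
            integral_add (integrable_const _) (hii.const_mul _), integral_const_mul, hmi,
            integral_div (12288 * s) (fun x : ℝ => x ^ 2)]
          simp
      _ ≤ _ := by gcongr
  have hm4 : 1 / 49152 ≤ m := by
    have e : (3072 * s ^ 2) / (12288 * s) = s / 4 := by field_simp; norm_num
    rw [e] at key
    by_contra hc
    push Not at hc
    nlinarith
  have hsub : {x : ℝ | s / 2 ≤ |x| ∧ |x| ≤ 12288 * s} ⊆
      {x | s / 2 ≤ 1 * x ∧ 1 * x ≤ 12288 * s} ∪ {x | s / 2 ≤ (-1) * x ∧ (-1) * x ≤ 12288 * s} := by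
    rintro x ⟨h1, h3⟩
    rcases abs_cases x with ⟨h4, -⟩ | ⟨h4, -⟩
    · left; constructor <;> linarith
    · right; constructor <;> linarith
  have hm5 := (measureReal_mono (μ := ρ) hsub).trans (measureReal_union_le _ _)
  by_cases hc : 1 / 98304 ≤ ρ.real {x | s / 2 ≤ 1 * x ∧ 1 * x ≤ 12288 * s}
  · exact ⟨1, by simp, hc⟩
  · exact ⟨-1, by simp, by linarith⟩

/-- Small-ball estimate: a log-concave law gives small mass to small multiples of its first
absolute moment, uniformly over all such laws. -/
lemma LC1.small_ball {η : ℝ} (hη : 0 < η) : ∃ c : ℝ, 0 < c ∧ ∀ (ρ : Measure ℝ)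
    [IsProbabilityMeasure ρ], LC1 ρ → ∀ s : ℝ, 0 < s → ∫ x, |x| ∂ρ = s →
      ρ.real {x | |x| < c * s} ≤ η := by
  obtain ⟨J, hJ⟩ := exists_nat_gt (98304 / η)
  set R : ℝ := 98304 with hR
  refine ⟨R⁻¹ ^ J / 4, by positivity, fun ρ _ h s hs hle => ?_⟩
  obtain ⟨e, he, hB⟩ := h.exists_side hs hle
  set N := ρ.real {x | |x| < R⁻¹ ^ J / 4 * s} with hN
  have hN0 : 0 ≤ N := measureReal_nonneg
  have hN1 : N ≤ 1 := measureReal_le_one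
  have he2 : e * e = 1 := by rw [← abs_mul_abs_self, he]; norm_num
  let a : ℕ → ℝ := fun j => R⁻¹ ^ j / 4 * s
  let D : ℕ → Set ℝ := fun j => (fun x => e * x) ⁻¹' Set.Ico (a (j + 1)) (a j)
  have hDm : ∀ j, MeasurableSet (D j) := fun j =>
    (measurable_const_mul e) measurableSet_Ico
  have hanti : Antitone a := antitone_nat_of_succ_le fun j => by
    simp only [a]
    have : R⁻¹ ^ (j + 1) ≤ R⁻¹ ^ j := by
      apply pow_le_pow_of_le_one (by positivity) (by norm_num [hR]) (by omega)
    gcongr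
  have hdisj : Pairwise (Function.onFun Disjoint D) := fun i j hij =>
    (hanti.pairwise_disjoint_on_Ico_succ hij).preimage _
  have hDmass : ∀ j ∈ Finset.range J, 1 / R * N ≤ ρ.real (D j) := by
    intro j hj
    rw [Finset.mem_range] at hj
    set l : ℝ := R⁻¹ ^ (j + 1) with hl
    have hl0 : 0 < l := by positivity
    have hl1 : l < 1 := pow_lt_one₀ (by positivity) (by norm_num [hR]) (by omega)
    have hlJ : R⁻¹ ^ J ≤ l := pow_le_pow_of_le_one (by positivity) (by norm_num [hR]) (by omega)
    have key := h {x | s / 2 ≤ e * x ∧ e * x ≤ 12288 * s} {x | |x| < R⁻¹ ^ J / 4 * s} (D j)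
      (by measurability)
      (measurableSet_lt (by fun_prop) measurable_const) l hl0 hl1 (by
        rintro x ⟨hx1, hx2⟩ y hy
        have hy' : |e * y| < R⁻¹ ^ J / 4 * s := by rw [abs_mul, he, one_mul]; exact hy
        have hle4 : R⁻¹ ^ J / 4 * s ≤ l / 4 * s := by gcongr
        obtain ⟨hy1, hy2⟩ := abs_lt.1 hy'
        have haj : a j = 98304 * l * s / 4 := by
          simp only [a, hl, pow_succ, hR]; field_simp
        have haj1 : a (j + 1) = l / 4 * s := rfl
        have hl1' : 0 < 1 - l := by linarith
        have e1 : e * (l * x + (1 - l) * y) = l * (e * x) + (1 - l) * (e * y) := by ring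
        have hls : 0 < l * s := by positivity
        have f1 : l * (s / 2) ≤ l * (e * x) := by gcongr
        have f2 : l * (e * x) ≤ l * (12288 * s) := by gcongr
        have f3 : -(l / 4 * s) ≤ (1 - l) * (e * y) := by nlinarith
        have f4 : (1 - l) * (e * y) ≤ l / 4 * s := by nlinarith
        show e * (l * x + (1 - l) * y) ∈ Set.Ico (a (j + 1)) (a j)
        rw [Set.mem_Ico, e1, haj, haj1]
        constructor <;> nlinarith) (hDm j)
    refine le_trans ?_ key
    gcongr
    · calc 1 / R = (1 / R) ^ (1 : ℝ) := by simp
        _ ≤ (1 / R) ^ l :=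
          Real.rpow_le_rpow_of_exponent_ge (by positivity) (by norm_num [hR]) hl1.le
        _ ≤ _ := Real.rpow_le_rpow (by positivity) hB hl0.le
    · rcases hN0.eq_or_lt with h0 | h0
      · rw [← h0]; positivity
      calc N = N ^ (1 : ℝ) := by simp
        _ ≤ N ^ (1 - l) := Real.rpow_le_rpow_of_exponent_ge h0 hN1 (by linarith)
  have hsum : ∑ j ∈ Finset.range J, ρ.real (D j) ≤ 1 := by
    rw [← measureReal_biUnion_finset (fun i _ j _ hij => hdisj hij) (fun j _ => hDm j)]
    exact measureReal_le_one
  have := (Finset.sum_le_sum hDmass).trans hsum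
  rw [Finset.sum_const, Finset.card_range, nsmul_eq_mul] at this
  rw [div_lt_iff₀ hη] at hJ
  by_contra hc
  push Not at hc
  have hJ0 : (0 : ℝ) < J := by
    by_contra hJ0
    push Not at hJ0
    nlinarith
  have h5 : (J : ℝ) * N ≤ R := by
    have e : (J : ℝ) * (1 / R * N) = J * N / R := by ring
    rwa [e, div_le_one (by positivity)] at this
  nlinarith

/-! ### Typical points -/

lemma integral_ite_one {V : Type*} [MeasurableSpace V] (ν : Measure V)
    {P : V → Prop} [DecidablePred P] (hP : MeasurableSet {y | P y}) :
    ∫ y, (if P y then (1 : ℝ) else 0) ∂ν = ν.real {y | P y} := by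
  have : (fun y => if P y then (1 : ℝ) else 0) = {y | P y}.indicator 1 := by
    ext y; simp [Set.indicator_apply]
  rw [this, integral_indicator_one hP]

lemma integrable_ite_one {V : Type*} [MeasurableSpace V] (ν : Measure V) [IsFiniteMeasure ν]
    {P : V → Prop} [DecidablePred P] (hP : MeasurableSet {y | P y}) :
    Integrable (fun y => if P y then (1 : ℝ) else 0) ν := by
  have : (fun y => if P y then (1 : ℝ) else 0) = {y | P y}.indicator (fun _ => 1) := by
    ext y; simp [Set.indicator_apply]
  rw [this]
  exact (integrable_const _).indicator hP

/-- A weighted sum over tuples of indices and patterns factorizes over the positions. -/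
lemma tuple_sum {ι : Type*} [Fintype ι] (k : ℕ) (w : ι → ℝ) (h : ι → Bool → ℝ) :
    ∑ i : Fin k → ι, (∏ j, w (i j)) * ∑ ε : Fin k → Bool, ∏ j, h (i j) (ε j) =
      (∑ i, w i * ∑ e, h i e) ^ k := by
  rw [Fintype.sum_pow]
  refine Finset.sum_congr rfl fun i _ => ?_
  rw [Finset.prod_mul_distrib, Finset.prod_univ_sum, Fintype.piFinset_univ]

lemma tuple_weight {ι : Type*} [Fintype ι] (k : ℕ) (w : ι → ℝ) :
    ∑ i : Fin k → ι, ∏ j, w (i j) = (∑ i, w i) ^ k := (Fintype.sum_pow _ _).symm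

section core
variable {ι : Type} [Fintype ι] {V : Type}

/-- The typical points: the weighted mean of `|x i|` is at least `1/2`, the weighted second moment
is bounded, and few coordinates (in weight) are small. -/
def typical (w : ι → ℝ) (x : ι → V → ℝ) (c η₂ C₁ : ℝ) : Set V :=
  {y | 1 / 2 ≤ ∑ i, w i * |x i y| ∧ ∑ i, w i * (x i y) ^ 2 ≤ C₁ ∧
    ∑ i, w i * (if |x i y| < c then (1 : ℝ) else 0) ≤ η₂}

/-- At a typical point, a sign pattern agreeing with the signs of the coordinates up to small
weight gives a large signed sum. -/
lemma sign_close {w : ι → ℝ} {x : ι → V → ℝ} (hw : ∀ i, 0 ≤ w i) {c η η₂ C₁ : ℝ}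
    (hC₁ : 0 < C₁) (hη : η ≤ 1 / (64 * C₁)) {y : V} (hy : y ∈ typical w x c η₂ C₁) {θ : ι → ℝ}
    (hθ : ∀ i, θ i = 1 ∨ θ i = -1)
    (hc : ∑ i, w i * (if θ i * x i y ≤ 0 then (1 : ℝ) else 0) ≤ η) :
    1 / 4 ≤ ∑ i, w i * (θ i * x i y) := by
  obtain ⟨h1, h2, -⟩ := hy
  have e1 : ∀ i, |x i y| - 2 * (1 / (16 * C₁) * (x i y) ^ 2 +
      4 * C₁ * (if θ i * x i y ≤ 0 then (1 : ℝ) else 0)) ≤ θ i * x i y := by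
    intro i
    have h0 : 0 ≤ 1 / (16 * C₁) * (x i y) ^ 2 := by positivity
    by_cases hb : θ i * x i y ≤ 0
    · rw [if_pos hb]
      have e2 : |x i y| = -(θ i * x i y) := by
        rw [← abs_of_nonpos hb, abs_mul]
        rcases hθ i with h | h <;> simp [h]
      have e3 : 1 / (16 * C₁) * (x i y) ^ 2 + 4 * C₁ - |x i y| =
          (|x i y| - 8 * C₁) ^ 2 / (16 * C₁) := by
        rw [← sq_abs]; field_simp; ring
      have : 0 ≤ (|x i y| - 8 * C₁) ^ 2 / (16 * C₁) := by positivity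
      linarith
    · rw [if_neg hb]
      have e2 : |x i y| = θ i * x i y := by
        rw [← abs_of_pos (not_le.1 hb), abs_mul]
        rcases hθ i with h | h <;> simp [h]
      linarith
  have e4 : ∑ i, w i * (|x i y| - 2 * (1 / (16 * C₁) * (x i y) ^ 2 +
      4 * C₁ * (if θ i * x i y ≤ 0 then (1 : ℝ) else 0))) ≤ ∑ i, w i * (θ i * x i y) :=
    Finset.sum_le_sum fun i _ => mul_le_mul_of_nonneg_left (e1 i) (hw i)
  have e5 : ∑ i, w i * (|x i y| - 2 * (1 / (16 * C₁) * (x i y) ^ 2 +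
      4 * C₁ * (if θ i * x i y ≤ 0 then (1 : ℝ) else 0))) =
      ∑ i, w i * |x i y| - 2 * (1 / (16 * C₁) * ∑ i, w i * (x i y) ^ 2 +
        4 * C₁ * ∑ i, w i * (if θ i * x i y ≤ 0 then (1 : ℝ) else 0)) := by
    simp only [Finset.mul_sum, ← Finset.sum_add_distrib, ← Finset.sum_sub_distrib]
    exact Finset.sum_congr rfl fun i _ => by ring
  have e6 : 1 / (16 * C₁) * ∑ i, w i * (x i y) ^ 2 ≤ 1 / 16 := by
    calc _ ≤ 1 / (16 * C₁) * C₁ := by gcongr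
      _ = _ := by field_simp
  have e7 : 4 * C₁ * ∑ i, w i * (if θ i * x i y ≤ 0 then (1 : ℝ) else 0) ≤ 1 / 16 := by
    calc _ ≤ 4 * C₁ * (1 / (64 * C₁)) := by gcongr; exact hc.trans hη
      _ = _ := by field_simp; norm_num
  linarith

variable [MeasurableSpace V]

lemma measurable_small {x : ι → V → ℝ} (hx : ∀ i, Measurable (x i)) (w : ι → ℝ) (c : ℝ) :
    Measurable fun y => ∑ i, w i * (if |x i y| < c then (1 : ℝ) else 0) :=
  Finset.measurable_sum _ fun i _ => (Measurable.ite
    (measurableSet_lt (measurable_abs.comp (hx i)) measurable_const) measurable_const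
      measurable_const).const_mul _

lemma measurableSet_typical {w : ι → ℝ} {x : ι → V → ℝ} (hx : ∀ i, Measurable (x i))
    (c η₂ C₁ : ℝ) : MeasurableSet (typical w x c η₂ C₁) := by
  refine MeasurableSet.inter (s₁ := {y | 1 / 2 ≤ ∑ i, w i * |x i y|})
    (measurableSet_le measurable_const (by fun_prop)) (MeasurableSet.inter
      (s₁ := {y | ∑ i, w i * (x i y) ^ 2 ≤ C₁}) (measurableSet_le (by fun_prop) measurable_const)
      (measurableSet_le (measurable_small hx w c) measurable_const))

/-- Typical points have a definite mass: a Paley-Zygmund estimate combined with Markov's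
inequality. -/
lemma mass_typical {ν : Measure V} [IsProbabilityMeasure ν] {w : ι → ℝ} {x : ι → V → ℝ}
    (hx : ∀ i, Measurable (x i)) (hw : ∀ i, 0 ≤ w i) (hw1 : ∑ i, w i = 1) {M c η₂ : ℝ}
    (hM : 0 < M) (hη₂ : 0 < η₂)
    (h1i : ∀ i, Integrable (fun y => |x i y|) ν) (h1 : ∀ i, ∫ y, |x i y| ∂ν = 1)
    (h2i : ∀ i, Integrable (fun y => (x i y) ^ 2) ν) (h2 : ∀ i, ∫ y, (x i y) ^ 2 ∂ν ≤ M)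
    (hsb : ∀ i, ν.real {y | |x i y| < c} ≤ η₂ / (16 * M)) :
    1 / (8 * M) ≤ ν.real (typical w x c η₂ (16 * M ^ 2)) := by
  set F : V → ℝ := fun y => ∑ i, w i * |x i y| with hF
  set Q : V → ℝ := fun y => ∑ i, w i * (x i y) ^ 2 with hQ
  set N : V → ℝ := fun y => ∑ i, w i * (if |x i y| < c then (1 : ℝ) else 0) with hN
  set T : V → ℝ := fun y => if y ∈ typical w x c η₂ (16 * M ^ 2) then (1 : ℝ) else 0 with hT
  have hms : ∀ i, MeasurableSet {y | |x i y| < c} := fun i =>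
    measurableSet_lt (measurable_abs.comp (hx i)) measurable_const
  have hTm := measurableSet_typical (w := w) hx c η₂ (16 * M ^ 2)
  have hFi : Integrable F ν := integrable_finsetSum _ fun i _ => (h1i i).const_mul _
  have hQi : Integrable Q ν := integrable_finsetSum _ fun i _ => (h2i i).const_mul _
  have hNi : Integrable N ν := integrable_finsetSum _ fun i _ =>
    (integrable_ite_one ν (hms i)).const_mul _
  have hTi : Integrable T ν := integrable_ite_one ν hTm
  have iF : ∫ y, F y ∂ν = 1 := by
    rw [hF, integral_finsetSum _ fun i _ => (h1i i).const_mul _]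
    simp only [integral_const_mul, h1, mul_one, hw1]
  have iQ : ∫ y, Q y ∂ν ≤ M := by
    rw [hQ, integral_finsetSum _ fun i _ => (h2i i).const_mul _]
    simp only [integral_const_mul]
    calc _ ≤ ∑ i, w i * M := Finset.sum_le_sum fun i _ =>
          mul_le_mul_of_nonneg_left (h2 i) (hw i)
      _ = M := by rw [← Finset.sum_mul, hw1, one_mul]
  have iN : ∫ y, N y ∂ν ≤ η₂ / (16 * M) := by
    rw [hN, integral_finsetSum _ fun i _ => (integrable_ite_one ν (hms i)).const_mul _]
    simp only [integral_const_mul, integral_ite_one ν (hms _)]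
    calc _ ≤ ∑ i, w i * (η₂ / (16 * M)) := Finset.sum_le_sum fun i _ =>
          mul_le_mul_of_nonneg_left (hsb i) (hw i)
      _ = _ := by rw [← Finset.sum_mul, hw1, one_mul]
  have iT : ∫ y, T y ∂ν = ν.real (typical w x c η₂ (16 * M ^ 2)) := integral_ite_one ν hTm
  have pt : ∀ y, F y ≤ 1 / 2 + 1 / (4 * M) * Q y +
      M * (T y + 1 / (16 * M ^ 2) * Q y + 1 / η₂ * N y) := by
    intro y
    have hQ0 : 0 ≤ Q y := Finset.sum_nonneg fun i _ => mul_nonneg (hw i) (sq_nonneg _)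
    have hN0 : 0 ≤ N y := Finset.sum_nonneg fun i _ => mul_nonneg (hw i) (by split_ifs <;> simp)
    have hT0 : 0 ≤ T y := by simp only [hT]; split_ifs <;> simp
    by_cases hF2 : 1 / 2 ≤ F y
    · -- Young's inequality: `F ≤ F² / (4M) + M`, and `F² ≤ Q` by convexity.
      have hFQ : F y ≤ 1 / (4 * M) * Q y + M := by
        have e1 : ∀ i, |x i y| ≤ 1 / (4 * M) * (x i y) ^ 2 + M := fun i => by
          have : 1 / (4 * M) * (x i y) ^ 2 + M - |x i y| = (|x i y| - 2 * M) ^ 2 / (4 * M) := by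
            rw [← sq_abs]; field_simp; ring
          have : 0 ≤ (|x i y| - 2 * M) ^ 2 / (4 * M) := by positivity
          linarith
        calc F y ≤ ∑ i, w i * (1 / (4 * M) * (x i y) ^ 2 + M) := Finset.sum_le_sum fun i _ =>
              mul_le_mul_of_nonneg_left (e1 i) (hw i)
          _ = 1 / (4 * M) * Q y + (∑ i, w i) * M := by
              rw [hQ, Finset.mul_sum, Finset.sum_mul, ← Finset.sum_add_distrib]
              exact Finset.sum_congr rfl fun i _ => by ring
          _ = _ := by rw [hw1, one_mul]
      have h1 : 1 ≤ T y + 1 / (16 * M ^ 2) * Q y + 1 / η₂ * N y := by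
        have a1 : 0 ≤ 1 / (16 * M ^ 2) * Q y := by positivity
        have a2 : 0 ≤ 1 / η₂ * N y := by positivity
        by_cases hq : Q y ≤ 16 * M ^ 2
        · by_cases hn : N y ≤ η₂
          · have : T y = 1 := if_pos ⟨hF2, hq, hn⟩
            linarith
          · have : 1 ≤ 1 / η₂ * N y := by
              rw [one_div_mul_eq_div, one_le_div hη₂]; exact (not_le.1 hn).le
            linarith
        · have : 1 ≤ 1 / (16 * M ^ 2) * Q y := by
            rw [one_div_mul_eq_div, one_le_div (by positivity)]; exact (not_le.1 hq).le
          linarith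
      nlinarith
    · have : 0 ≤ 1 / (4 * M) * Q y + M * (T y + 1 / (16 * M ^ 2) * Q y + 1 / η₂ * N y) := by
        positivity
      linarith
  have hi1 : Integrable (fun y => 1 / 2 + 1 / (4 * M) * Q y) ν :=
    (integrable_const _).add (hQi.const_mul _)
  have hi2 : Integrable (fun y => T y + 1 / (16 * M ^ 2) * Q y) ν := hTi.add (hQi.const_mul _)
  have hi3 : Integrable (fun y => T y + 1 / (16 * M ^ 2) * Q y + 1 / η₂ * N y) ν :=
    hi2.add (hNi.const_mul _)
  have key := integral_mono hFi (hi1.add (hi3.const_mul M)) pt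
  simp only [Pi.add_apply] at key
  rw [integral_add hi1 (hi3.const_mul M), integral_add (integrable_const _) (hQi.const_mul _),
    integral_const_mul M, integral_add hi2 (hNi.const_mul _), integral_add hTi (hQi.const_mul _),
    integral_const_mul, integral_const_mul, integral_const_mul, iF, iT] at key
  simp only [integral_const, probReal_univ, smul_eq_mul, one_mul] at key
  set t := ν.real (typical w x c η₂ (16 * M ^ 2))
  have b1 : 1 / (4 * M) * ∫ y, Q y ∂ν ≤ 1 / 4 := by
    calc _ ≤ 1 / (4 * M) * M := by gcongr
      _ = 1 / 4 := by field_simp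
  have b2 : M * (1 / (16 * M ^ 2) * ∫ y, Q y ∂ν) ≤ 1 / 16 := by
    calc _ ≤ M * (1 / (16 * M ^ 2) * M) := by gcongr
      _ = 1 / 16 := by field_simp
  have b3 : M * (1 / η₂ * ∫ y, N y ∂ν) ≤ 1 / 16 := by
    calc _ ≤ M * (1 / η₂ * (η₂ / (16 * M))) := by gcongr
      _ = 1 / 16 := by field_simp
  rw [div_le_iff₀ (by positivity)]
  nlinarith

end core

/-! ### Sign cells -/

/-- The sign `±1` encoded by a Boolean. -/
def sg (e : Bool) : ℝ := if e then 1 else -1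

section tuples
variable {ι : Type} {V : Type} {k : ℕ}

/-- The points of `W` at which the coordinates `x (i j)` are at least `c` in absolute value and have
the signs prescribed by `ε`. -/
def signSet (x : ι → V → ℝ) (c : ℝ) (W : Set V) (i : Fin k → ι) (ε : Fin k → Bool) : Set V :=
  {y | y ∈ W ∧ ∀ j, c ≤ sg (ε j) * x (i j) y}

lemma ite_signSet (x : ι → V → ℝ) (c : ℝ) (W : Set V) (i : Fin k → ι) (ε : Fin k → Bool) (y : V) :
    (if y ∈ signSet x c W i ε then (1 : ℝ) else 0) =
      (if y ∈ W then 1 else 0) * ∏ j, if c ≤ sg (ε j) * x (i j) y then (1 : ℝ) else 0 := by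
  rw [Finset.prod_ite_zero]
  simp only [signSet, Set.mem_ofPred_eq, Finset.mem_univ, true_implies, Finset.prod_const_one]
  by_cases h : y ∈ W <;> simp [h]

lemma sum_sg (a c : ℝ) (hc : 0 < c) :
    ∑ e, (if c ≤ sg e * a then (1 : ℝ) else 0) = if |a| < c then 0 else 1 := by
  simp only [Fintype.sum_bool, sg, if_true, Bool.false_eq_true, if_false]
  rcases lt_or_ge |a| c with h | h
  · have := abs_lt.1 h
    rw [if_neg (by linarith), if_neg (by linarith), if_pos h, add_zero]
  · rw [if_neg (not_lt.2 h)]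
    rcases le_abs.1 h with h1 | h1
    · rw [if_pos (by linarith), if_neg (by linarith), add_zero]
    · rw [if_neg (by linarith), if_pos (by linarith), zero_add]

variable [MeasurableSpace V]

lemma measurableSet_signSet {x : ι → V → ℝ} (hx : ∀ i, Measurable (x i)) (c : ℝ) {W : Set V}
    (hW : MeasurableSet W) (i : Fin k → ι) (ε : Fin k → Bool) :
    MeasurableSet (signSet x c W i ε) := by
  have : signSet x c W i ε = W ∩ ⋂ j, {y | c ≤ sg (ε j) * x (i j) y} := by
    ext y; simp [signSet]
  rw [this]
  exact hW.inter (MeasurableSet.iInter fun j =>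
    measurableSet_le measurable_const ((hx _).const_mul _))

lemma measurableSet_flat {x : ι → V → ℝ} (hx : ∀ i, Measurable (x i)) (c : ℝ) (i : Fin k → ι) :
    MeasurableSet {z | ∀ j, |x (i j) z| ≤ c} := by
  have : {z | ∀ j, |x (i j) z| ≤ c} = ⋂ j, {z | |x (i j) z| ≤ c} := by ext; simp
  rw [this]
  exact MeasurableSet.iInter fun j =>
    measurableSet_le (measurable_abs.comp (hx _)) measurable_const

variable [Fintype ι]

/-- Averaged over tuples, the sign cells have small total squared mass, that is, two independent
typical points rarely share a sign pattern. If their signs disagree on weight at least `η`, a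
random tuple misses the disagreement with probability at most `(1 - η) ^ k`; otherwise the signs
of one point make the signed sum at the other large, which has probability at most `δ`. -/
lemma sum_sq_le {ν : Measure V} [IsProbabilityMeasure ν] {w : ι → ℝ} {x : ι → V → ℝ}
    (hx : ∀ i, Measurable (x i)) (hw : ∀ i, 0 ≤ w i) (hw1 : ∑ i, w i = 1) {c η δ : ℝ} (hc : 0 < c)
    (hη1 : η ≤ 1) {W : Set V} (hW : MeasurableSet W)
    (hclose : ∀ y ∈ W, ∀ θ : ι → ℝ, (∀ i, θ i = 1 ∨ θ i = -1) →
      ∑ i, w i * (if θ i * x i y ≤ 0 then (1 : ℝ) else 0) ≤ η →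
        1 / 4 ≤ ∑ i, w i * (θ i * x i y))
    (hδ : ∀ θ : ι → ℝ, (∀ i, θ i = 1 ∨ θ i = -1) →
      ν.real {y | 1 / 4 ≤ ∑ i, w i * (θ i * x i y)} ≤ δ) :
    ∑ i : Fin k → ι, (∏ j, w (i j)) * ∑ ε : Fin k → Bool, ν.real (signSet x c W i ε) ^ 2 ≤
      (1 - η) ^ k + δ := by
  let I : (Fin k → ι) → (Fin k → Bool) → V → ℝ := fun i ε y =>
    if y ∈ signSet x c W i ε then 1 else 0
  have hI : ∀ i ε, Integrable (I i ε) ν := fun i ε =>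
    integrable_ite_one ν (measurableSet_signSet hx c hW i ε)
  have iI : ∀ i ε, ∫ y, I i ε y ∂ν = ν.real (signSet x c W i ε) := fun i ε =>
    integral_ite_one ν (measurableSet_signSet hx c hW i ε)
  have pt : ∀ y' y, ∑ i : Fin k → ι, (∏ j, w (i j)) * ∑ ε : Fin k → Bool, I i ε y' * I i ε y ≤
      (1 - η) ^ k + if 1 / 4 ≤ ∑ i, w i * ((if 0 ≤ x i y' then 1 else -1) * x i y) then 1
        else 0 := by
    intro y' y
    have hb0 : 0 ≤ 1 - η := by linarith
    by_cases hy : y ∈ W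
    swap
    · have : ∀ i ε, I i ε y = 0 := fun i ε => if_neg fun h => hy h.1
      simp only [this, mul_zero, Finset.sum_const_zero]
      split_ifs <;> positivity
    set h : ι → Bool → ℝ := fun i e => (if c ≤ sg e * x i y' then 1 else 0) *
      (if c ≤ sg e * x i y then 1 else 0) with hh
    have h0 : ∀ i e, 0 ≤ h i e := fun i e => by simp only [hh]; split_ifs <;> simp
    have e1 : ∑ i : Fin k → ι, (∏ j, w (i j)) * ∑ ε : Fin k → Bool, I i ε y' * I i ε y ≤
        (∑ i, w i * ∑ e, h i e) ^ k := by
      rw [← tuple_sum]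
      refine Finset.sum_le_sum fun i _ => mul_le_mul_of_nonneg_left
        (Finset.sum_le_sum fun ε _ => ?_) (Finset.prod_nonneg fun j _ => hw _)
      simp only [I, ite_signSet, hh, Finset.prod_mul_distrib, if_pos hy, one_mul]
      refine mul_le_mul_of_nonneg_right ?_
        (Finset.prod_nonneg fun j _ => by split_ifs <;> simp)
      refine mul_le_of_le_one_left (Finset.prod_nonneg fun j _ => by split_ifs <;> simp) ?_
      split_ifs <;> simp
    set θ : ι → ℝ := fun i => if 0 ≤ x i y' then 1 else -1 with hθ
    have hθ' : ∀ i, θ i = 1 ∨ θ i = -1 := fun i => by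
      simp only [hθ]; split_ifs <;> simp
    set dis := ∑ i, w i * (if θ i * x i y ≤ 0 then (1 : ℝ) else 0) with hdis
    have e2 : ∑ i, w i * ∑ e, h i e ≤ 1 - dis := by
      rw [← hw1, hdis, ← Finset.sum_sub_distrib]
      refine Finset.sum_le_sum fun i _ => ?_
      rw [← mul_one_sub]
      refine mul_le_mul_of_nonneg_left ?_ (hw i)
      have hsum := sum_sg (x i y) c hc
      simp only [hh, hθ, Fintype.sum_bool, sg, if_true, Bool.false_eq_true, if_false] at hsum ⊢
      split_ifs <;> linarith
    have e3 : 0 ≤ ∑ i, w i * ∑ e, h i e := Finset.sum_nonneg fun i _ =>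
      mul_nonneg (hw i) (Finset.sum_nonneg fun e _ => h0 i e)
    have hd0 : 0 ≤ dis := Finset.sum_nonneg fun i _ =>
      mul_nonneg (hw i) (by split_ifs <;> simp)
    refine e1.trans ?_
    by_cases hd : dis ≤ η
    · rw [if_pos (hclose y hy θ hθ' hd)]
      have : (∑ i, w i * ∑ e, h i e) ^ k ≤ 1 := pow_le_one₀ e3 (by linarith)
      have : 0 ≤ (1 - η) ^ k := by positivity
      linarith
    · have : (∑ i, w i * ∑ e, h i e) ^ k ≤ (1 - η) ^ k :=
        pow_le_pow_left₀ e3 (by linarith [not_le.1 hd]) k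
      have : (0 : ℝ) ≤ if 1 / 4 ≤ ∑ i, w i * (θ i * x i y) then 1 else 0 := by
        split_ifs <;> simp
      linarith
  have half : ∀ y', ∑ i : Fin k → ι, (∏ j, w (i j)) * ∑ ε : Fin k → Bool,
      I i ε y' * ν.real (signSet x c W i ε) ≤ (1 - η) ^ k + δ := by
    intro y'
    have hθ' : ∀ i, (if 0 ≤ x i y' then (1 : ℝ) else -1) = 1 ∨
        (if 0 ≤ x i y' then (1 : ℝ) else -1) = -1 := fun i => by split_ifs <;> simp
    have hms : MeasurableSet {y | 1 / 4 ≤ ∑ i, w i * ((if 0 ≤ x i y' then 1 else -1) * x i y)} :=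
      measurableSet_le measurable_const (by fun_prop)
    have hsi : ∀ i : Fin k → ι, Integrable (fun y => ∑ ε : Fin k → Bool, I i ε y' * I i ε y) ν :=
      fun i => integrable_finsetSum _ fun ε _ => (hI i ε).const_mul _
    have := integral_mono (μ := ν) (integrable_finsetSum _ fun i _ => (hsi i).const_mul _)
      ((integrable_const _).add (integrable_ite_one ν hms)) (pt y')
    rw [integral_finsetSum _ fun i _ => (hsi i).const_mul _] at this
    simp only [Pi.add_apply] at this
    rw [integral_add (integrable_const _) (integrable_ite_one ν hms), integral_ite_one ν hms] at this
    simp only [integral_const_mul, integral_finsetSum _ fun ε _ => (hI _ ε).const_mul _, iI,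
      integral_const, probReal_univ, smul_eq_mul, one_mul] at this
    exact this.trans (by gcongr; exact hδ _ hθ')
  have hsi : ∀ i : Fin k → ι, Integrable (fun y' => ∑ ε : Fin k → Bool,
      I i ε y' * ν.real (signSet x c W i ε)) ν :=
    fun i => integrable_finsetSum _ fun ε _ => (hI i ε).mul_const _
  have := integral_mono (μ := ν) (integrable_finsetSum _ fun i _ => (hsi i).const_mul _)
      (integrable_const _) half
  rw [integral_finsetSum _ fun i _ => (hsi i).const_mul _] at this
  simp only [integral_const_mul, integral_finsetSum _ fun ε _ => (hI _ ε).mul_const _,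
    integral_mul_const, iI, integral_const, probReal_univ, smul_eq_mul, one_mul] at this
  simpa only [sq] using this

end tuples

/-! ### Square roots of cell masses and flat regions -/

section tuples2
variable {ι : Type} {V : Type} {k : ℕ} [MeasurableSpace V]

/-- The midpoint of a point in a sign cell and a point where the same coordinates are flat lies in
the open orthant with that sign pattern. These orthants are disjoint, so for each tuple the
geometric means of cell mass and flat mass sum to at most one. -/
lemma sum_sqrt_le {μ : Measure V} [IsProbabilityMeasure μ] {x : ι → V → ℝ}
    (hx : ∀ i, Measurable (x i)) {c : ℝ} {W : Set V} {i : Fin k → ι}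
    (hmid : ∀ ε : Fin k → Bool,
      μ.real (signSet x c W i ε) * μ.real {z | ∀ j, |x (i j) z| ≤ c / 2} ≤
        μ.real {z | ∀ j, 0 < sg (ε j) * x (i j) z} ^ 2) :
    ∑ ε : Fin k → Bool, Real.sqrt (μ.real (signSet x c W i ε) *
      μ.real {z | ∀ j, |x (i j) z| ≤ c / 2}) ≤ 1 := by
  calc _ ≤ ∑ ε : Fin k → Bool, μ.real {z | ∀ j, 0 < sg (ε j) * x (i j) z} :=
        Finset.sum_le_sum fun ε _ => Real.sqrt_le_iff.2 ⟨measureReal_nonneg, hmid ε⟩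
    _ = μ.real (⋃ ε ∈ (Finset.univ : Finset (Fin k → Bool)),
          {z | ∀ j, 0 < sg (ε j) * x (i j) z}) := by
        rw [measureReal_biUnion_finset]
        · intro ε _ ε' _ hne
          refine Set.disjoint_left.2 fun z hz hz' => hne (funext fun j => ?_)
          have h1 : 0 < sg (ε j) * x (i j) z := hz j
          have h2 : 0 < sg (ε' j) * x (i j) z := hz' j
          revert h1 h2
          cases ε j <;> cases ε' j <;> simp [sg] <;> exact le_of_lt
        · intro ε _
          have : {z | ∀ j, 0 < sg (ε j) * x (i j) z} = ⋂ j, {z | 0 < sg (ε j) * x (i j) z} := by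
            ext; simp
          rw [this]
          exact MeasurableSet.iInter fun j => measurableSet_lt measurable_const
            ((hx _).const_mul _)
    _ ≤ 1 := measureReal_le_one

variable [Fintype ι]

/-- Averaged over tuples, the unconditional mass of the flat region times the total conditional
mass of the sign cells is not too small. -/
lemma le_sum_flat {μ ν : Measure V} [IsProbabilityMeasure μ] [IsProbabilityMeasure ν] {w : ι → ℝ}
    {x : ι → V → ℝ} (hx : ∀ i, Measurable (x i)) (hw : ∀ i, 0 ≤ w i) (hw1 : ∑ i, w i = 1)
    {c η₂ C₁ : ℝ} (hc : 0 < c) (hη₂ : 0 < η₂) (hα : 0 ≤ 1 - 2 * η₂)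
    (hflat : ∀ i, μ.real {z | c / 2 < |x i z|} ≤ η₂ / 2) :
    ν.real (typical w x c η₂ C₁) / 2 * (1 - 2 * η₂) ^ k ≤
      ∑ i : Fin k → ι, (∏ j, w (i j)) * (μ.real {z | ∀ j, |x (i j) z| ≤ c / 2} *
        ∑ ε : Fin k → Bool, ν.real (signSet x c (typical w x c η₂ C₁) i ε)) := by
  set W := typical w x c η₂ C₁ with hWd
  have hW : MeasurableSet W := measurableSet_typical hx c η₂ C₁
  let I : (Fin k → ι) → (Fin k → Bool) → V → ℝ := fun i ε y =>
    if y ∈ signSet x c W i ε then 1 else 0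
  have hI : ∀ i ε, Integrable (I i ε) ν := fun i ε =>
    integrable_ite_one ν (measurableSet_signSet hx c hW i ε)
  have iI : ∀ i ε, ∫ y, I i ε y ∂ν = ν.real (signSet x c W i ε) := fun i ε =>
    integral_ite_one ν (measurableSet_signSet hx c hW i ε)
  let G : (Fin k → ι) → V → ℝ := fun i z => if ∀ j, |x (i j) z| ≤ c / 2 then 1 else 0
  have hG : ∀ i, Integrable (G i) μ := fun i => integrable_ite_one μ (measurableSet_flat hx (c / 2) i)
  have iG : ∀ i, ∫ y, G i y ∂μ = μ.real {z | ∀ j, |x (i j) z| ≤ c / 2} := fun i =>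
    integral_ite_one μ (measurableSet_flat hx (c / 2) i)
  have hms : ∀ i, MeasurableSet {z | c / 2 < |x i z|} := fun i =>
    measurableSet_lt measurable_const (measurable_abs.comp (hx i))
  let N : V → ℝ := fun z => ∑ i, w i * (if c / 2 < |x i z| then (1 : ℝ) else 0)
  have hNm : Measurable N := Finset.measurable_sum _ fun i _ => (Measurable.ite
    (hms i) measurable_const measurable_const).const_mul _
  have hN0 : ∀ z, 0 ≤ N z := fun z => Finset.sum_nonneg fun i _ =>
    mul_nonneg (hw i) (by split_ifs <;> simp)
  have hNi : Integrable N μ := integrable_finsetSum _ fun i _ =>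
    (integrable_ite_one μ (hms i)).const_mul _
  have iN : ∫ z, N z ∂μ ≤ η₂ / 2 := by
    rw [integral_finsetSum _ fun i _ => (integrable_ite_one μ (hms i)).const_mul _]
    simp only [integral_const_mul, integral_ite_one μ (hms _)]
    calc _ ≤ ∑ i, w i * (η₂ / 2) := Finset.sum_le_sum fun i _ =>
          mul_le_mul_of_nonneg_left (hflat i) (hw i)
      _ = _ := by rw [← Finset.sum_mul, hw1, one_mul]
  have hZm : MeasurableSet {z | N z ≤ η₂} := measurableSet_le hNm measurable_const
  have hZ : 1 / 2 ≤ μ.real {z | N z ≤ η₂} := by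
    have e1 : ∀ z, 1 ≤ (if N z ≤ η₂ then (1 : ℝ) else 0) + 1 / η₂ * N z := fun z => by
      have : 0 ≤ 1 / η₂ * N z := mul_nonneg (by positivity) (hN0 z)
      split_ifs with h
      · linarith
      · rw [one_div_mul_eq_div, zero_add, one_le_div hη₂]; exact (not_le.1 h).le
    have e2 := integral_mono (μ := μ) (integrable_const _)
      ((integrable_ite_one μ hZm).add (hNi.const_mul (1 / η₂))) e1
    simp only [Pi.add_apply] at e2
    rw [integral_add (integrable_ite_one μ hZm) (hNi.const_mul _), integral_ite_one μ hZm,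
      integral_const_mul] at e2
    simp only [integral_const, probReal_univ, smul_eq_mul, one_mul] at e2
    have e3 : 1 / η₂ * ∫ z, N z ∂μ ≤ 1 / 2 := by
      calc _ ≤ 1 / η₂ * (η₂ / 2) := by gcongr
        _ = _ := by field_simp
    linarith
  have hWi : Integrable (fun y => if y ∈ W then (1 : ℝ) else 0) ν := integrable_ite_one ν hW
  have iW : ∫ y, (if y ∈ W then (1 : ℝ) else 0) ∂ν = ν.real W := integral_ite_one ν hW
  have pt : ∀ z y, ((if N z ≤ η₂ then (1 : ℝ) else 0) * (1 - 2 * η₂) ^ k) *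
      (if y ∈ W then (1 : ℝ) else 0) ≤
      ∑ i : Fin k → ι, (∏ j, w (i j)) * (G i z * ∑ ε : Fin k → Bool, I i ε y) := by
    intro z y
    have hR : 0 ≤ ∑ i : Fin k → ι, (∏ j, w (i j)) * (G i z * ∑ ε : Fin k → Bool, I i ε y) :=
      Finset.sum_nonneg fun i _ => mul_nonneg (Finset.prod_nonneg fun j _ => hw _)
        (mul_nonneg (by simp only [G]; split_ifs <;> simp) (Finset.sum_nonneg fun ε _ => by
          simp only [I]; split_ifs <;> simp))
    by_cases hy : y ∈ W
    swap
    · rw [if_neg hy, mul_zero]; exact hR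
    by_cases hz : N z ≤ η₂
    swap
    · rw [if_neg hz, zero_mul, zero_mul]; exact hR
    rw [if_pos hy, if_pos hz, one_mul, mul_one]
    have e1 : ∑ i : Fin k → ι, (∏ j, w (i j)) * (G i z * ∑ ε : Fin k → Bool, I i ε y) =
        (∑ i, w i * ∑ e, (if |x i z| ≤ c / 2 then 1 else 0) *
          (if c ≤ sg e * x i y then (1 : ℝ) else 0)) ^ k := by
      rw [← tuple_sum]
      refine Finset.sum_congr rfl fun i _ => ?_
      rw [Finset.mul_sum]
      congr 1
      refine Finset.sum_congr rfl fun ε _ => ?_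
      simp only [I, ite_signSet, if_pos hy, one_mul, Finset.prod_mul_distrib, G]
      congr 1
      rw [Finset.prod_ite_zero]
      simp
    rw [e1]
    refine pow_le_pow_left₀ hα ?_ k
    have e2 : ∀ i, w i - w i * (if c / 2 < |x i z| then (1 : ℝ) else 0) -
        w i * (if |x i y| < c then (1 : ℝ) else 0) ≤
        w i * ∑ e, (if |x i z| ≤ c / 2 then 1 else 0) *
          (if c ≤ sg e * x i y then (1 : ℝ) else 0) := by
      intro i
      rw [← Finset.mul_sum, sum_sg _ _ hc]
      have := hw i
      rcases lt_or_ge (c / 2) |x i z| with h | h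
      · rw [if_pos h, if_neg (not_le.2 h)]
        split_ifs <;> simp [this]
      · rw [if_neg (not_lt.2 h), if_pos h]
        split_ifs <;> simp
    have e3 := Finset.sum_le_sum fun i (_ : i ∈ Finset.univ) => e2 i
    rw [Finset.sum_sub_distrib, Finset.sum_sub_distrib, hw1] at e3
    have e4 : ∑ i, w i * (if |x i y| < c then (1 : ℝ) else 0) ≤ η₂ := hy.2.2
    have e5 : ∑ i, w i * (if c / 2 < |x i z| then (1 : ℝ) else 0) ≤ η₂ := hz
    linarith
  have half : ∀ z, ((if N z ≤ η₂ then (1 : ℝ) else 0) * (1 - 2 * η₂) ^ k) * ν.real W ≤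
      ∑ i : Fin k → ι, (∏ j, w (i j)) * (G i z * ∑ ε : Fin k → Bool,
        ν.real (signSet x c W i ε)) := by
    intro z
    have hsi : ∀ i : Fin k → ι, Integrable (fun y => ∑ ε : Fin k → Bool, I i ε y) ν :=
      fun i => integrable_finsetSum _ fun ε _ => hI i ε
    have := integral_mono (μ := ν) (hWi.const_mul _)
      (integrable_finsetSum _ fun i _ => ((hsi i).const_mul (G i z)).const_mul _) (pt z)
    rw [integral_finsetSum _ fun i _ => ((hsi i).const_mul _).const_mul _] at this
    simp only [integral_const_mul, integral_finsetSum _ fun ε _ => hI _ ε, iI] at this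
    rwa [iW] at this
  have := integral_mono (μ := μ) (((integrable_ite_one μ hZm).mul_const _).mul_const _)
      (integrable_finsetSum _ fun i _ => ((hG i).mul_const _).const_mul _) half
  rw [integral_finsetSum _ fun i _ => ((hG i).mul_const _).const_mul _] at this
  simp only [integral_const_mul, integral_mul_const, iG, integral_ite_one μ hZm] at this
  refine le_trans ?_ this
  have h0 : 0 ≤ ν.real W * (1 - 2 * η₂) ^ k := by positivity
  nlinarith

end tuples2

/-- A cubic minorant of the square root, tangent at `q = 1 / (4τ²)`. -/
lemma cubic_le_sqrt {q τ : ℝ} (hq : 0 ≤ q) (hτ : 0 ≤ τ) :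
    3 * τ * q - 4 * τ ^ 3 * q ^ 2 ≤ Real.sqrt q := by
  set a := Real.sqrt q
  have ha : 0 ≤ a := Real.sqrt_nonneg q
  have e : q = a ^ 2 := (Real.sq_sqrt hq).symm
  rw [e]
  have : a - (3 * τ * a ^ 2 - 4 * τ ^ 3 * (a ^ 2) ^ 2) =
      a * ((τ * a + 1) * (2 * (τ * a) - 1) ^ 2) := by ring
  have : 0 ≤ a * ((τ * a + 1) * (2 * (τ * a) - 1) ^ 2) := by positivity
  linarith

/-! ### Existence of good signs -/

/-- The numerical contradiction closing the tuple argument: the length `k` of the tuples is taken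
proportional to `p`, and `τ` balances the two averages. -/
lemma tuple_numeric {η c₃ : ℝ} (hη : 0 < η) (hη1 : η ≤ 1 / 2) (hc : 0 < c₃) (hc1 : c₃ ≤ 1) :
    ∃ L : ℝ, 0 ≤ L ∧ ∀ p : ℝ, 1 ≤ p → ∃ k : ℕ, ∀ EQ ED : ℝ,
      c₃ * (1 - 2 * (η / 12)) ^ k ≤ EQ → ED ≤ (1 - η) ^ k + Real.exp (-(L * p)) →
      (∀ τ : ℝ, 0 ≤ τ → 3 * τ * EQ - 4 * τ ^ 3 * ED ≤ Real.exp (p / 2)) → False := by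
  obtain ⟨B, hB⟩ := pow_unbounded_of_one_lt (Real.exp 1 * (3 / c₃ ^ 3))
    (show 1 < 1 + η / 2 by linarith)
  set α : ℝ := 1 - 2 * (η / 12) with hα
  set β : ℝ := 1 - η with hβ
  have hα0 : 0 < α := by rw [hα]; linarith
  have hβ0 : 0 < β := by rw [hβ]; linarith
  have hlog : Real.log β ≤ 0 := Real.log_nonpos hβ0.le (by rw [hβ]; linarith)
  refine ⟨-(2 * B * Real.log β), ?_, fun p hp => ⟨B * ⌈p⌉₊, fun EQ ED hEQ hED h => ?_⟩⟩
  · have : 0 ≤ 2 * (B : ℝ) := by positivity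
    nlinarith
  set m := ⌈p⌉₊ with hm
  have hpm : p ≤ m := Nat.le_ceil p
  have hmp : (m : ℝ) ≤ 2 * p := by
    have := Nat.ceil_lt_add_one (show 0 ≤ p by linarith)
    rw [← hm] at this; linarith
  have hm1 : 1 ≤ m := by
    have : (1 : ℝ) ≤ m := hp.trans hpm
    exact_mod_cast this
  have hδ : Real.exp (-(-(2 * B * Real.log β) * p)) ≤ β ^ (B * m) := by
    rw [← Real.exp_log (pow_pos hβ0 _), Real.log_pow]
    apply Real.exp_le_exp.2
    have : ((B * m : ℕ) : ℝ) ≤ 2 * B * p := by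
      push_cast
      have : (0 : ℝ) ≤ B := by positivity
      nlinarith
    nlinarith
  set k := B * m with hk
  have hαβ : (1 + η / 2) * β ≤ α ^ 3 := by
    rw [hα, hβ]
    nlinarith [mul_pos hη hη, mul_pos hη (mul_pos hη hη)]
  have hbig : 3 / c₃ ^ 3 * Real.exp p ≤ (1 + η / 2) ^ k := by
    have hc3 : 1 ≤ 3 / c₃ ^ 3 := by
      rw [one_le_div (by positivity)]
      have := pow_le_one₀ (n := 3) hc.le hc1
      linarith
    calc 3 / c₃ ^ 3 * Real.exp p ≤ (3 / c₃ ^ 3) ^ m * Real.exp m := by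
          gcongr
          exact le_self_pow₀ hc3 (by omega)
      _ = (Real.exp 1 * (3 / c₃ ^ 3)) ^ m := by
          rw [mul_pow, ← Real.exp_nat_mul, mul_one, mul_comm]
      _ ≤ ((1 + η / 2) ^ B) ^ m := pow_le_pow_left₀ (by positivity) hB.le m
      _ = _ := by rw [hk, pow_mul]
  have hED' : ED ≤ 2 * β ^ k := by linarith
  set a := α ^ k with ha
  set b := β ^ k with hb
  have ha0 : 0 < a := by positivity
  have hb0 : 0 < b := by positivity
  have hab : (1 + η / 2) ^ k * b ≤ a ^ 3 := by
    calc (1 + η / 2) ^ k * b = ((1 + η / 2) * β) ^ k := (mul_pow _ _ _).symm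
      _ ≤ (α ^ 3) ^ k := pow_le_pow_left₀ (by positivity) hαβ k
      _ = a ^ 3 := pow_right_comm _ _ _
  have hτ := h (Real.sqrt (c₃ * a / (8 * b))) (Real.sqrt_nonneg _)
  set τ := Real.sqrt (c₃ * a / (8 * b)) with hτd
  have hτ0 : 0 ≤ τ := Real.sqrt_nonneg _
  have hτ2 : τ ^ 2 = c₃ * a / (8 * b) := Real.sq_sqrt (by positivity)
  have e1 : 2 * τ * (c₃ * a) ≤ Real.exp (p / 2) := by
    have f1 : 3 * τ * (c₃ * a) ≤ 3 * τ * EQ := by gcongr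
    have f2 : 4 * τ ^ 3 * ED ≤ 4 * τ ^ 3 * (2 * b) := by gcongr
    have f3 : 4 * τ ^ 3 * (2 * b) = τ * (c₃ * a) := by
      rw [pow_succ, hτ2]; field_simp; ring
    linarith
  have e2 : (2 * τ * (c₃ * a)) ^ 2 ≤ Real.exp p := by
    calc _ ≤ Real.exp (p / 2) ^ 2 := pow_le_pow_left₀ (by positivity) e1 2
      _ = Real.exp p := by rw [← Real.exp_nat_mul]; congr 1; push_cast; ring
  have e3 : (2 * τ * (c₃ * a)) ^ 2 = c₃ ^ 3 / 2 * (a ^ 3 / b) := by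
    rw [mul_pow, mul_pow, hτ2]; field_simp; norm_num
  have e4 : (1 + η / 2) ^ k ≤ a ^ 3 / b := by rwa [le_div_iff₀ hb0]
  have e5 : c₃ ^ 3 / 2 * (3 / c₃ ^ 3 * Real.exp p) ≤ Real.exp p := by
    calc _ ≤ c₃ ^ 3 / 2 * (a ^ 3 / b) := by gcongr; exact hbig.trans e4
      _ ≤ _ := by rw [← e3]; exact e2
  have e6 : c₃ ^ 3 / 2 * (3 / c₃ ^ 3 * Real.exp p) = 3 / 2 * Real.exp p := by field_simp
  have := Real.exp_pos p
  linarith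

/-- Abstract form of the main argument. If the coordinates `x i` are of order one and spread out
under `ν`, small under `μ`, and `ν` has density at most `exp p` with respect to `μ`, then midpoint
log-concavity forces some signed weighted sum to be large with `ν`-probability at least
`exp (-L p)`. -/
theorem exists_signs : ∃ L η₀ η₃ : ℝ, 0 ≤ L ∧ 0 < η₀ ∧ 0 < η₃ ∧
    ∀ (ι V : Type) [Fintype ι] [MeasurableSpace V] (μ ν : Measure V) [IsProbabilityMeasure μ]
      [IsProbabilityMeasure ν] (w : ι → ℝ) (x : ι → V → ℝ) (p c : ℝ),
      (∀ i, Measurable (x i)) → (∀ i, 0 ≤ w i) → ∑ i, w i = 1 → 1 ≤ p → 0 < c →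
      (∀ i, Integrable (fun y => |x i y|) ν) → (∀ i, ∫ y, |x i y| ∂ν = 1) →
      (∀ i, Integrable (fun y => (x i y) ^ 2) ν) → (∀ i, ∫ y, (x i y) ^ 2 ∂ν ≤ 3072) →
      (∀ i, ν.real {y | |x i y| < c} ≤ η₀) →
      (∀ i, μ.real {z | c / 2 < |x i z|} ≤ η₃) →
      (∀ B, MeasurableSet B → ν.real B ≤ Real.exp p * μ.real B) →
      (∀ W, MeasurableSet W → ∀ (k : ℕ) (i : Fin k → ι) (ε : Fin k → Bool),
        μ.real (signSet x c W i ε) * μ.real {z | ∀ j, |x (i j) z| ≤ c / 2} ≤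
          μ.real {z | ∀ j, 0 < sg (ε j) * x (i j) z} ^ 2) →
      ∃ θ : ι → ℝ, (∀ i, θ i = 1 ∨ θ i = -1) ∧
        Real.exp (-(L * p)) < ν.real {y | 1 / 4 ≤ ∑ i, w i * (θ i * x i y)} := by
  set C₁ : ℝ := 16 * 3072 ^ 2 with hC₁
  set η : ℝ := 1 / (64 * C₁) with hη
  have hη0 : 0 < η := by rw [hη, hC₁]; norm_num
  have hη1 : η ≤ 1 / 2 := by rw [hη, hC₁]; norm_num
  clear_value η
  obtain ⟨L, hL, hnum⟩ := tuple_numeric (η := η) (c₃ := 1 / (8 * 3072) / 2) hη0 hη1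
    (by norm_num) (by norm_num)
  refine ⟨L, η / 12 / (16 * 3072), η / 12 / 2, hL, by positivity, by positivity, ?_⟩
  intro ι V _ _ μ ν _ _ w x p c hx hw hw1 hp hc h1i h1 h2i h2 hsb hflat hden hmid
  by_contra hcon
  push Not at hcon
  obtain ⟨k, hk⟩ := hnum p hp
  set W := typical w x c (η / 12) C₁ with hWd
  have hW : MeasurableSet W := measurableSet_typical hx _ _ _
  have hmass : 1 / (8 * 3072) ≤ ν.real W :=
    mass_typical hx hw hw1 (by norm_num) (by positivity) h1i h1 h2i h2 hsb
  have hwk : ∀ i : Fin k → ι, 0 ≤ ∏ j, w (i j) := fun i => Finset.prod_nonneg fun j _ => hw _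
  have hE := le_sum_flat (μ := μ) (ν := ν) (C₁ := C₁) (k := k) hx hw hw1 hc
    (show 0 < η / 12 by positivity) (by linarith) hflat
  have hD := sum_sq_le (ν := ν) (k := k) (η := η) hx hw hw1 hc (by linarith) hW
    (fun y hy θ hθ h => sign_close hw (by positivity) hη.le hy hθ h) hcon
  refine hk _ _ (le_trans ?_ hE) hD fun τ hτ => ?_
  · have : 0 ≤ 1 - 2 * (η / 12) := by linarith
    gcongr
  · have hi : ∀ i : Fin k → ι, 3 * τ * (μ.real {z | ∀ j, |x (i j) z| ≤ c / 2} *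
        ∑ ε : Fin k → Bool, ν.real (signSet x c W i ε)) -
        4 * τ ^ 3 * ∑ ε : Fin k → Bool, ν.real (signSet x c W i ε) ^ 2 ≤ Real.exp (p / 2) := by
      intro i
      set g := μ.real {z | ∀ j, |x (i j) z| ≤ c / 2} with hg
      have hg0 : 0 ≤ g := measureReal_nonneg
      have hg1 : g ≤ 1 := measureReal_le_one
      have hgs : g ≤ Real.sqrt g := Real.le_sqrt_of_sq_le (by nlinarith)
      have a1 : ∀ ε : Fin k → Bool, 3 * τ * (g * ν.real (signSet x c W i ε)) -
          4 * τ ^ 3 * ν.real (signSet x c W i ε) ^ 2 ≤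
          Real.exp (p / 2) * Real.sqrt (μ.real (signSet x c W i ε) * g) := by
        intro ε
        set q := ν.real (signSet x c W i ε) with hq
        have hq0 : 0 ≤ q := measureReal_nonneg
        have b1 := cubic_le_sqrt hq0 hτ
        have b2 : q ≤ Real.exp p * μ.real (signSet x c W i ε) :=
          hden _ (measurableSet_signSet hx c hW i ε)
        have b3 : Real.sqrt (Real.exp p) = Real.exp (p / 2) := by
          rw [Real.exp_half]
        have b4 : 0 ≤ 4 * τ ^ 3 * q ^ 2 := by positivity
        calc 3 * τ * (g * q) - 4 * τ ^ 3 * q ^ 2 ≤ g * (3 * τ * q - 4 * τ ^ 3 * q ^ 2) := by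
              nlinarith
          _ ≤ g * Real.sqrt q := by gcongr
          _ ≤ Real.sqrt g * Real.sqrt q := by gcongr
          _ ≤ Real.sqrt g * Real.sqrt (Real.exp p * μ.real (signSet x c W i ε)) := by gcongr
          _ = _ := by
            rw [Real.sqrt_mul (Real.exp_pos p).le, b3, Real.sqrt_mul measureReal_nonneg]; ring
      calc _ = ∑ ε : Fin k → Bool, (3 * τ * (g * ν.real (signSet x c W i ε)) -
            4 * τ ^ 3 * ν.real (signSet x c W i ε) ^ 2) := by
            simp only [Finset.sum_sub_distrib, Finset.mul_sum]
        _ ≤ ∑ ε : Fin k → Bool, Real.exp (p / 2) *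
            Real.sqrt (μ.real (signSet x c W i ε) * g) := Finset.sum_le_sum fun ε _ => a1 ε
        _ ≤ Real.exp (p / 2) * 1 := by
            rw [← Finset.mul_sum]
            exact mul_le_mul_of_nonneg_left (sum_sqrt_le hx (hmid W hW k i)) (Real.exp_pos _).le
        _ = _ := mul_one _
    calc _ = ∑ i : Fin k → ι, (∏ j, w (i j)) * (3 * τ * (μ.real {z | ∀ j, |x (i j) z| ≤ c / 2} *
        ∑ ε : Fin k → Bool, ν.real (signSet x c W i ε)) -
        4 * τ ^ 3 * ∑ ε : Fin k → Bool, ν.real (signSet x c W i ε) ^ 2) := by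
          rw [Finset.mul_sum, Finset.mul_sum, ← Finset.sum_sub_distrib]
          exact Finset.sum_congr rfl fun i _ => by ring
      _ ≤ ∑ i : Fin k → ι, (∏ j, w (i j)) * Real.exp (p / 2) :=
          Finset.sum_le_sum fun i _ => mul_le_mul_of_nonneg_left (hi i) (hwk i)
      _ = Real.exp (p / 2) := by rw [← Finset.sum_mul, tuple_weight, hw1, one_pow, one_mul]

/-! ### The dual functional and the weak moment -/

/-- The coordinates of a vector in the unit ball of the dual norm are at most one. -/
lemma abs_le_one_of_dual {n : ℕ} {r : ℝ} (hr : 1 ≤ r) {t : Fin n → ℝ}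
    (ht : ∀ x : Fin n → ℝ, |∑ i, t i * x i| ≤ lrNorm r x) (i : Fin n) : |t i| ≤ 1 := by
  have h := ht (Pi.single i 1)
  have h0 : r ≠ 0 := by linarith
  have e : ∀ j, |(Pi.single i (1 : ℝ) : Fin n → ℝ) j| ^ r = if j = i then 1 else 0 := by
    intro j
    by_cases hj : j = i
    · subst hj; simp
    · simp [hj, h0]
  have h1 : lrNorm r (Pi.single i 1 : Fin n → ℝ) = 1 := by
    unfold lrNorm
    rw [Finset.sum_congr rfl fun j _ => e j]
    simp
  rw [h1] at h
  simpa [Pi.single_apply] using h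

section moments2
variable {n : ℕ} {μ : Measure (Fin n → ℝ)}

lemma integral_marginal (i : Fin n) {f : ℝ → ℝ} (hf : Measurable f) :
    ∫ x, f x ∂(μ.map fun y => y i) = ∫ y, f (y i) ∂μ :=
  integral_map (measurable_pi_apply i).aemeasurable hf.aestronglyMeasurable

lemma integrable_marginal (i : Fin n) {f : ℝ → ℝ} (hf : Measurable f) :
    Integrable f (μ.map fun y => y i) ↔ Integrable (fun y => f (y i)) μ :=
  integrable_map_measure hf.aestronglyMeasurable (measurable_pi_apply i).aemeasurable

variable [IsProbabilityMeasure μ]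

lemma isProb_marginal (i : Fin n) : IsProbabilityMeasure (μ.map fun y => y i) :=
  Measure.isProbabilityMeasure_map (measurable_pi_apply i).aemeasurable

lemma IsLogConcave.integrable_coord (h : IsLogConcave μ) (i : Fin n) {q : ℝ} (hq : 0 < q) :
    Integrable (fun y => |y i| ^ q) μ := by
  have := isProb_marginal (μ := μ) i
  exact (integrable_marginal i (f := fun x => |x| ^ q) (by fun_prop)).1
    ((h.marginal i).integrable_abs_rpow hq)

lemma dual_rpow_le {r p : ℝ} (hr : 1 ≤ r) (hp : 1 ≤ p) {t : Fin n → ℝ}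
    (ht : ∀ x : Fin n → ℝ, |∑ i, t i * x i| ≤ lrNorm r x) (y : Fin n → ℝ) :
    |∑ i, t i * y i| ^ p ≤ (n : ℝ) ^ (p - 1) * ∑ i, |y i| ^ p := by
  calc |∑ i, t i * y i| ^ p ≤ (∑ i, |y i|) ^ p := by
        refine Real.rpow_le_rpow (abs_nonneg _) ((Finset.abs_sum_le_sum_abs _ _).trans
          (Finset.sum_le_sum fun i _ => ?_)) (by linarith)
        rw [abs_mul]
        exact mul_le_of_le_one_left (abs_nonneg _) (abs_le_one_of_dual hr ht i)
    _ ≤ _ := by simpa using Real.rpow_sum_le_const_mul_sum_rpow Finset.univ y hp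

lemma IsLogConcave.integrable_dual (h : IsLogConcave μ) {r p : ℝ} (hr : 1 ≤ r) (hp : 1 ≤ p)
    {t : Fin n → ℝ} (ht : ∀ x : Fin n → ℝ, |∑ i, t i * x i| ≤ lrNorm r x) :
    Integrable (fun y => |∑ i, t i * y i| ^ p) μ := by
  refine Integrable.mono' ((integrable_finsetSum Finset.univ fun i _ =>
    h.integrable_coord i (show 0 < p by linarith)).const_mul ((n : ℝ) ^ (p - 1)))
    (Measurable.aestronglyMeasurable (by fun_prop)) (ae_of_all _ fun y => ?_)
  rw [Real.norm_of_nonneg (by positivity)]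
  exact dual_rpow_le hr hp ht y

/-- The supremum defining the weak moment is over a bounded set, so every admissible `t` gives a
lower bound. -/
lemma le_sigmaR {Ω : Type} [MeasureSpace Ω] [IsProbabilityMeasure (ℙ : Measure Ω)]
    {X : Ω → Fin n → ℝ} (hX : Measurable X) (h : IsLogConcave (Measure.map X ℙ)) {r p : ℝ}
    (hr : 1 ≤ r) (hp : 1 ≤ p) {t : Fin n → ℝ}
    (ht : ∀ x : Fin n → ℝ, |∑ i, t i * x i| ≤ lrNorm r x) :
    (∫ y, |∑ i, t i * y i| ^ p ∂(Measure.map X ℙ)) ^ (1 / p) ≤ sigmaR r X p := by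
  have hprob : IsProbabilityMeasure (Measure.map X ℙ) :=
    Measure.isProbabilityMeasure_map hX.aemeasurable
  have hmap : ∀ t : Fin n → ℝ, ∫ y, |∑ i, t i * y i| ^ p ∂(Measure.map X ℙ) =
      ∫ ω, |∑ i, t i * X ω i| ^ p := fun t =>
    integral_map hX.aemeasurable (Measurable.aestronglyMeasurable (by fun_prop))
  rw [hmap]
  have hb : BddAbove (Set.range fun t : {t : Fin n → ℝ // ∀ x : Fin n → ℝ,
      |∑ i, t i * x i| ≤ lrNorm r x} => (∫ ω, |∑ i, t.1 i * X ω i| ^ p) ^ (1 / p)) := by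
    refine ⟨(∫ y, (n : ℝ) ^ (p - 1) * ∑ i, |y i| ^ p ∂(Measure.map X ℙ)) ^ (1 / p), ?_⟩
    rintro _ ⟨⟨t, ht⟩, rfl⟩
    simp only
    rw [← hmap]
    refine Real.rpow_le_rpow (integral_nonneg fun y => by positivity) ?_ (by positivity)
    exact integral_mono (h.integrable_dual hr hp ht) ((integrable_finsetSum Finset.univ fun i _ =>
      h.integrable_coord i (show 0 < p by linarith)).const_mul _) (dual_rpow_le hr hp ht)
  exact le_ciSup hb ⟨t, ht⟩

lemma sigmaR_nonneg {Ω : Type} [MeasureSpace Ω] (X : Ω → Fin n → ℝ) (r p : ℝ) :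
    0 ≤ sigmaR r X p :=
  Real.iSup_nonneg fun _ => Real.rpow_nonneg (integral_nonneg fun _ => by positivity) _

lemma IsLogConcave.midpoint (h : IsLogConcave μ) {B C D : Set (Fin n → ℝ)} (hB : MeasurableSet B)
    (hC : MeasurableSet C)
    (hD : ∀ x ∈ B, ∀ y ∈ C, (1 / 2 : ℝ) • x + (1 / 2 : ℝ) • y ∈ D) :
    μ.real B * μ.real C ≤ μ.real D ^ 2 := by
  have := h.real hB hC (l := 1 / 2) (by norm_num) (by norm_num) (D := D) (by
    norm_num only at hD ⊢; exact hD)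
  rw [show (1 - 1 / 2 : ℝ) = 1 / 2 by norm_num, ← Real.sqrt_eq_rpow, ← Real.sqrt_eq_rpow,
    ← Real.sqrt_mul measureReal_nonneg] at this
  exact (Real.sqrt_le_left measureReal_nonneg).1 this

end moments2

/-- Let `ν` have density at most `exp p` with respect to `μ`, and let `I` be a set of coordinates
whose first absolute moments `s i` under `ν` are much larger than their `L²`-norms under `μ`. Then
the `ℓ_r`-norm of `(s i)` over `I` is bounded by a weak moment of order `p` of `μ`. -/
theorem exists_dual : ∃ C D : ℝ, 0 < C ∧ 0 < D ∧
    ∀ (n : ℕ) (μ ν : Measure (Fin n → ℝ)) [IsProbabilityMeasure μ] [IsProbabilityMeasure ν],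
      IsLogConcave μ → IsLogConcave ν → ∀ p : ℝ, 1 ≤ p →
      (∀ B, MeasurableSet B → ν.real B ≤ Real.exp p * μ.real B) →
      ∀ r : ℝ, 1 ≤ r → ∀ (s : Fin n → ℝ) (I : Finset (Fin n)),
      (∀ i, ∫ y, |y i| ∂ν = s i) →
      (∀ i ∈ I, 0 < s i ∧ C ^ 2 * ∫ y, (y i) ^ 2 ∂μ ≤ s i ^ 2) →
      ∃ t : Fin n → ℝ, (∀ x : Fin n → ℝ, |∑ i, t i * x i| ≤ lrNorm r x) ∧
        (∑ i ∈ I, s i ^ r) ^ (1 / r) ≤ D * (∫ y, |∑ i, t i * y i| ^ p ∂μ) ^ (1 / p) := by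
  obtain ⟨L, η₀, η₃, hL, hη₀, hη₃, hcore⟩ := exists_signs
  obtain ⟨c, hc, hsmall⟩ := LC1.small_ball hη₀
  refine ⟨Real.sqrt (4 / (c ^ 2 * η₃)), 4 * Real.exp (1 + L), by positivity, by positivity, ?_⟩
  intro n μ ν _ _ hμ hν p hp hden r hr s I hs hI
  have hr0 : 0 < r := by linarith
  rw [Real.sq_sqrt (by positivity)] at hI
  rcases I.eq_empty_or_nonempty with rfl | hne
  · refine ⟨0, fun x => by simp [lrNorm]; positivity, ?_⟩
    rw [Finset.sum_empty, Real.zero_rpow (by positivity)]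
    positivity
  set Sr := ∑ i ∈ I, s i ^ r with hSr
  have hSr0 : 0 < Sr := Finset.sum_pos (fun i hi => Real.rpow_pos_of_pos (hI i hi).1 _) hne
  set S := Sr ^ (1 / r) with hS
  have hS0 : 0 < S := Real.rpow_pos_of_pos hSr0 _
  have hSS : S ^ r = Sr := by rw [hS, ← Real.rpow_mul hSr0.le, one_div_mul_cancel hr0.ne',
    Real.rpow_one]
  have hsp : ∀ i : I, 0 < s i := fun i => (hI i i.2).1
  have hdivabs : ∀ (i : I) (y : Fin n → ℝ), |y i / s i| = |y i| / s i := fun i y => by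
    rw [abs_div, abs_of_pos (hsp i)]
  have hprob : ∀ i, IsProbabilityMeasure (ν.map fun y => y i) := fun i => isProb_marginal i
  have hmean : ∀ i, ∫ x, |x| ∂(ν.map fun y => y i) = s i := fun i => by
    rw [integral_marginal i (f := fun x => |x|) (by fun_prop), hs]
  have h1i : ∀ i, Integrable (fun y : Fin n → ℝ => |y i|) ν := fun i =>
    (integrable_marginal i (f := fun x => |x|) (by fun_prop)).1 (hν.marginal i).integrable_abs
  have hsq : ∀ i : I, Integrable (fun y : Fin n → ℝ => (y i) ^ 2) ν ∧
      ∫ y, (y i) ^ 2 ∂ν ≤ 3072 * s i ^ 2 := fun i => by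
    have := (hν.marginal i).second_moment (hsp i) (hmean i).le
    rwa [integrable_marginal (i : Fin n) (f := fun x => x ^ 2) (by fun_prop),
      integral_marginal (i : Fin n) (f := fun x => x ^ 2) (by fun_prop)] at this
  have hw1 : ∑ i : I, s i ^ r / Sr = 1 := by
    rw [← Finset.sum_div, Finset.sum_coe_sort I (fun i => s i ^ r), ← hSr, div_self hSr0.ne']
  have hxm : ∀ i : I, Measurable (fun y : Fin n → ℝ => y i / s i) := fun i =>
    (measurable_pi_apply _).div_const _
  obtain ⟨θ, hθ, hbig⟩ := hcore I (Fin n → ℝ) μ ν (fun i => s i ^ r / Sr)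
    (fun i y => y i / s i) p c hxm
    (fun i => div_nonneg (Real.rpow_nonneg (hsp i).le _) hSr0.le) hw1 hp hc
    (fun i => by simp only [hdivabs]; exact (h1i i).div_const _)
    (fun i => by
      simp only [hdivabs]
      rw [integral_div, hs, div_self (hsp i).ne'])
    (fun i => by simp only [div_pow]; exact (hsq i).1.div_const _)
    (fun i => by
      simp only [div_pow]
      rw [integral_div, div_le_iff₀ (pow_pos (hsp i) 2)]
      exact (hsq i).2)
    (fun i => by
      have := hsmall (ν.map fun y => y i) (hν.marginal i) (s i) (hsp i) (hmean i)
      rw [map_measureReal_apply (measurable_pi_apply _)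
        (measurableSet_lt (by fun_prop) measurable_const)] at this
      simp only [hdivabs, div_lt_iff₀ (hsp i)]
      exact this)
    (fun i => by
      have h2i : Integrable (fun y : Fin n → ℝ => (y i) ^ 2) μ := by
        simpa using hμ.integrable_coord i (show (0 : ℝ) < 2 by norm_num)
      have h2i' : Integrable (fun y : Fin n → ℝ => (y i / s i) ^ 2) μ := by
        simp only [div_pow]; exact h2i.div_const _
      have hm := mul_meas_ge_le_integral_of_nonneg (ae_of_all μ fun y => sq_nonneg (y i / s i))
        h2i' ((c / 2) ^ 2)
      have hsub : {z : Fin n → ℝ | c / 2 < |z i / s i|} ⊆ {z | (c / 2) ^ 2 ≤ (z i / s i) ^ 2} := by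
        intro z hz
        rw [Set.mem_ofPred_eq, ← sq_abs (z i / s i)]
        exact pow_le_pow_left₀ (by positivity) (le_of_lt hz) 2
      have hm' : (c / 2) ^ 2 * μ.real {z | c / 2 < |z i / s i|} ≤ ∫ y, (y i / s i) ^ 2 ∂μ :=
        (mul_le_mul_of_nonneg_left (measureReal_mono hsub) (by positivity)).trans hm
      have h4 := (hI i i.2).2
      have h5 : ∫ y, (y i / s i) ^ 2 ∂μ ≤ c ^ 2 * η₃ / 4 := by
        simp only [div_pow]
        rw [integral_div, div_le_iff₀ (pow_pos (hsp i) 2)]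
        rw [div_mul_eq_mul_div, div_le_iff₀ (by positivity)] at h4
        linarith
      have h6 : 0 < c ^ 2 := by positivity
      nlinarith)
    hden
    (fun W hW k i ε => by
      refine hμ.midpoint (measurableSet_signSet hxm c hW i ε) (measurableSet_flat hxm (c / 2) i)
        fun a ha b hb j => ?_
      have h1 : c ≤ sg (ε j) * (a (i j) / s (i j)) := ha.2 j
      have h2 : |b (i j) / s (i j)| ≤ c / 2 := hb j
      have h3 : |sg (ε j)| = 1 := by cases ε j <;> simp [sg]
      have h4 : |sg (ε j) * (b (i j) / s (i j))| ≤ c / 2 := by rw [abs_mul, h3, one_mul]; exact h2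
      have h5 := (abs_le.1 h4).1
      have h6 : sg (ε j) * (((1 / 2 : ℝ) • a + (1 / 2 : ℝ) • b) (i j) / s (i j)) =
          1 / 2 * (sg (ε j) * (a (i j) / s (i j))) + 1 / 2 * (sg (ε j) * (b (i j) / s (i j))) := by
        simp only [Pi.add_apply, Pi.smul_apply, smul_eq_mul]; ring
      show 0 < sg (ε j) * (((1 / 2 : ℝ) • a + (1 / 2 : ℝ) • b) (i j) / s (i j))
      rw [h6]; linarith)
  -- the functional norming `(s i)` for `i ∈ I`, with its signs flipped according to `θ`
  set t : Fin n → ℝ := fun i => if hi : i ∈ I then S * (s i ^ r / Sr * (θ ⟨i, hi⟩ / s i)) else 0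
    with ht
  have hty : ∀ y : Fin n → ℝ, ∑ i, t i * y i =
      S * ∑ i : I, s i ^ r / Sr * (θ i * (y i / s i)) := by
    intro y
    have e1 : ∑ i, t i * y i = ∑ i ∈ I, t i * y i := by
      symm
      refine Finset.sum_subset (Finset.subset_univ _) fun i _ hi => ?_
      simp [ht, hi]
    rw [e1, ← Finset.sum_coe_sort I, Finset.mul_sum]
    refine Finset.sum_congr rfl fun i _ => ?_
    simp only [ht, i.2, dif_pos]
    ring
  have hadm : ∀ x : Fin n → ℝ, |∑ i, t i * x i| ≤ lrNorm r x := by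
    intro y
    rw [hty, abs_mul, abs_of_pos hS0]
    have e1 : |∑ i : I, s i ^ r / Sr * (θ i * (y i / s i))| ≤
        ∑ i : I, s i ^ r / Sr * (|y i| / s i) := by
      refine (Finset.abs_sum_le_sum_abs _ _).trans (Finset.sum_le_sum fun i _ => ?_)
      have h1 : |θ i| = 1 := by rcases hθ i with h | h <;> simp [h]
      rw [abs_mul, abs_mul, h1, one_mul, hdivabs, abs_of_nonneg
        (div_nonneg (Real.rpow_nonneg (hsp i).le _) hSr0.le)]
    have e2 := Real.arith_mean_le_rpow_mean Finset.univ (fun i : I => s i ^ r / Sr)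
      (fun i => |y i| / s i) (fun i _ => div_nonneg (Real.rpow_nonneg (hsp i).le _) hSr0.le) hw1
      (fun i _ => div_nonneg (abs_nonneg _) (hsp i).le) hr
    have e3 : ∑ i : I, s i ^ r / Sr * (|y i| / s i) ^ r = (∑ i ∈ I, |y i| ^ r) / Sr := by
      rw [← Finset.sum_coe_sort I, Finset.sum_div]
      refine Finset.sum_congr rfl fun i _ => ?_
      have := Real.rpow_pos_of_pos (hsp i) r
      rw [Real.div_rpow (abs_nonneg _) (hsp i).le]
      field_simp
    rw [e3] at e2
    have hsum0 : 0 ≤ ∑ i ∈ I, |y i| ^ r := Finset.sum_nonneg fun i _ => by positivity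
    calc S * |∑ i : I, s i ^ r / Sr * (θ i * (y i / s i))|
        ≤ S * ((∑ i ∈ I, |y i| ^ r) / Sr) ^ (1 / r) := by gcongr; exact e1.trans e2
      _ = (∑ i ∈ I, |y i| ^ r) ^ (1 / r) := by
          rw [Real.div_rpow hsum0 hSr0.le, ← hS]; field_simp
      _ ≤ _ := by
          refine Real.rpow_le_rpow hsum0 ?_ (by positivity)
          exact Finset.sum_le_sum_of_subset_of_nonneg (Finset.subset_univ _)
            fun i _ _ => by positivity
  refine ⟨t, hadm, ?_⟩
  set T := ∫ y, |∑ i, t i * y i| ^ p ∂μ with hT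
  have hT0 : 0 ≤ T := integral_nonneg fun y => by positivity
  have hmk := mul_meas_ge_le_integral_of_nonneg
    (ae_of_all μ fun y : Fin n → ℝ => Real.rpow_nonneg (abs_nonneg (∑ i, t i * y i)) p)
    (hμ.integrable_dual hr hp hadm) ((S / 4) ^ p)
  have hsub : {y : Fin n → ℝ | 1 / 4 ≤ ∑ i : I, s i ^ r / Sr * (θ i * (y i / s i))} ⊆
      {y | (S / 4) ^ p ≤ |∑ i, t i * y i| ^ p} := by
    intro y hy
    refine Real.rpow_le_rpow (by positivity) ?_ (by linarith)
    rw [hty]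
    refine le_trans ?_ (le_abs_self _)
    have : S * (1 / 4) ≤ _ := mul_le_mul_of_nonneg_left hy hS0.le
    linarith
  have hbm := hden {y : Fin n → ℝ | 1 / 4 ≤ ∑ i : I, s i ^ r / Sr * (θ i * (y i / s i))}
    (measurableSet_le measurable_const (by fun_prop))
  have h1 : Real.exp (-((1 + L) * p)) ≤ μ.real {y | (S / 4) ^ p ≤ |∑ i, t i * y i| ^ p} := by
    refine le_trans ?_ (measureReal_mono hsub)
    have h2 := hbig.le.trans hbm
    rw [show -((1 + L) * p) = -(L * p) + -p by ring, Real.exp_add, Real.exp_neg p,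
      ← div_eq_mul_inv, div_le_iff₀ (Real.exp_pos p), mul_comm (μ.real _)]
    exact h2
  have h2 : (S / (4 * Real.exp (1 + L))) ^ p ≤ T := by
    calc (S / (4 * Real.exp (1 + L))) ^ p = (S / 4) ^ p * Real.exp (-((1 + L) * p)) := by
          rw [← div_div, Real.div_rpow (by positivity) (Real.exp_pos _).le, ← Real.exp_mul,
            Real.exp_neg, div_eq_mul_inv]
      _ ≤ (S / 4) ^ p * _ := by gcongr
      _ ≤ T := hmk
  have h3 : S / (4 * Real.exp (1 + L)) ≤ T ^ (1 / p) := by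
    have hq : 0 ≤ S / (4 * Real.exp (1 + L)) := by positivity
    calc S / (4 * Real.exp (1 + L)) = ((S / (4 * Real.exp (1 + L))) ^ p) ^ (1 / p) := by
          rw [← Real.rpow_mul hq, mul_one_div_cancel (by linarith), Real.rpow_one]
      _ ≤ _ := Real.rpow_le_rpow (by positivity) h2 (by positivity)
  rw [div_le_iff₀ (by positivity)] at h3
  linarith

/-! ### Truncated moments of the conditional law -/

section final
variable {n : ℕ} {ν : Measure (Fin n → ℝ)} [IsProbabilityMeasure ν]

/-- The whole `r`-th moment of a coordinate is controlled by its first absolute moment. -/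
lemma IsLogConcave.cut_heavy (hν : IsLogConcave ν) {r : ℝ} (hr : 1 ≤ r) (i : Fin n) {s : ℝ}
    (hs : 0 < s) (hle : ∫ y, |y i| ∂ν ≤ s) (T : ℝ) :
    ∫ y, Set.indicator {y | T ≤ y i} (fun y => |y i| ^ r) y ∂ν ≤ 3 * (16 * s * r) ^ r := by
  have := isProb_marginal (μ := ν) i
  have hr0 : 0 < r := by linarith
  rw [← integral_marginal i (f := fun x => |x|) (by fun_prop)] at hle
  obtain ⟨h1, h2⟩ := (hν.marginal i).exp_moment_mean hs hle
  have h3 := integral_abs_rpow_le (by positivity) h1 h2 hr0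
  rw [integral_marginal i (f := fun x => |x| ^ r) (by fun_prop)] at h3
  refine le_trans (integral_mono_of_nonneg (ae_of_all _ fun y =>
    Set.indicator_nonneg (fun _ _ => by positivity) _) (hν.integrable_coord i hr0)
    (ae_of_all _ fun y => Set.indicator_le_self' (fun _ _ => by positivity) _)) h3

/-- Above a level `T` the `r`-th moment of a coordinate is exponentially small, on the scale of
its first absolute moment. -/
lemma IsLogConcave.cut_light (hν : IsLogConcave ν) {r : ℝ} (hr : 1 ≤ r) (i : Fin n) {s : ℝ}
    (hs : 0 < s) (hle : ∫ y, |y i| ∂ν ≤ s) (T : ℝ) :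
    ∫ y, Set.indicator {y | T ≤ y i} (fun y => |y i| ^ r) y ∂ν ≤
      3 * (32 * s * r) ^ r * Real.exp (-T / (32 * s)) := by
  have := isProb_marginal (μ := ν) i
  have hr0 : 0 < r := by linarith
  rw [← integral_marginal i (f := fun x => |x|) (by fun_prop)] at hle
  obtain ⟨h1, h2⟩ := (hν.marginal i).exp_moment_mean hs hle
  have h3 := integral_trunc_rpow_le (by positivity) h1 h2 hr0 T
  rw [integral_marginal i (f := Set.indicator {x | T ≤ x} fun x => |x| ^ r)
    (Measurable.indicator (by fun_prop) measurableSet_Ici)] at h3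
  rw [show 32 * s = 2 * (16 * s) by ring]
  exact h3

/-- Expectation over a null-measurable event in terms of the conditional law. -/
lemma integral_indicator_inter_cond {μ : Measure (Fin n → ℝ)} [IsProbabilityMeasure μ]
    {K : Set (Fin n → ℝ)} (hK : NullMeasurableSet K μ) (h0 : μ K ≠ 0) (S : Set (Fin n → ℝ))
    (f : (Fin n → ℝ) → ℝ) :
    ∫ y, Set.indicator (K ∩ S) f y ∂μ = μ.real K * ∫ y, Set.indicator S f y ∂(μ[|K]) := by
  rw [← Set.indicator_indicator, integral_indicator₀ hK, ProbabilityTheory.cond,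
    integral_smul_measure, smul_eq_mul, ENNReal.toReal_inv, ← mul_assoc]
  change _ = μ.real K * (μ.real K)⁻¹ * _
  rw [mul_inv_cancel₀, one_mul]
  exact (measureReal_ne_zero_iff).2 h0

/-- The bound in terms of the law `μ` of the random vector, with any upper bound `W` for its weak
moment of order `-log μ(K)`. Coordinates with first conditional moment above `C d i` are handled
by `exists_dual` and `cut_heavy`, the other ones by `cut_light`. -/
lemma cut_measure : ∃ C₆ C₇ : ℝ, 0 < C₆ ∧ 0 < C₇ ∧
    ∀ (n : ℕ) (μ : Measure (Fin n → ℝ)) [IsProbabilityMeasure μ], IsLogConcave μ →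
    ∀ r : ℝ, 1 ≤ r → ∀ K : Set (Fin n → ℝ), Convex ℝ K →
    0 < μ.real K → μ.real K ≤ (Real.exp 1)⁻¹ → ∀ t : ℝ, r ≤ t → ∀ W : ℝ, 0 ≤ W →
    (∀ a : Fin n → ℝ, (∀ x : Fin n → ℝ, |∑ i, a i * x i| ≤ lrNorm r x) →
      (∫ y, |∑ i, a i * y i| ^ (-Real.log (μ.real K)) ∂μ) ^ (1 / (-Real.log (μ.real K))) ≤ W) →
    (∑ i, ∫ y, Set.indicator (K ∩ {y | t * Real.sqrt (∫ z, (z i) ^ 2 ∂μ) ≤ y i})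
        (fun y => |y i| ^ r) y ∂μ) ≤
      C₆ ^ r * μ.real K * (r ^ r * W ^ r +
        ((∑ i, Real.sqrt (∫ z, (z i) ^ 2 ∂μ) ^ r) ^ (1 / r) * t) ^ r * Real.exp (-t / C₇)) := by
  obtain ⟨C, D, hC, hD, hdual⟩ := exists_dual
  refine ⟨48 * D + 96 * C, 32 * C, by positivity, by positivity, ?_⟩
  intro n μ _ hμ r hr K hK hq0 hq1 t ht W hW hWs
  have hr0 : 0 < r := by linarith
  have ht0 : 0 < t := by linarith
  have hKm : NullMeasurableSet K μ := hμ.nullMeasurableSet_of_convex n _ μ K hK (by simp)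
  have h0 : μ K ≠ 0 := (measureReal_ne_zero_iff (measure_ne_top _ _)).1 hq0.ne'
  have hνp : IsProbabilityMeasure (μ[|K]) := ProbabilityTheory.cond_isProbabilityMeasure h0
  have hνl : IsLogConcave (μ[|K]) := hμ.cond hK hKm h0
  set ν := μ[|K] with hν
  set q := μ.real K with hq
  have hp : 1 ≤ -Real.log q := by
    have := Real.log_le_log hq0 hq1
    rw [Real.log_inv, Real.log_exp] at this
    linarith
  have hexp : Real.exp (-Real.log q) = q⁻¹ := by rw [Real.exp_neg, Real.exp_log hq0]
  have hden : ∀ B, MeasurableSet B → ν.real B ≤ Real.exp (-Real.log q) * μ.real B := by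
    intro B hB
    rw [hexp, hν, ProbabilityTheory.cond, measureReal_ennreal_smul_apply, ENNReal.toReal_inv]
    refine mul_le_mul_of_nonneg_left ?_ (by positivity)
    rw [measureReal_restrict_apply hB]
    exact measureReal_mono Set.inter_subset_left
  set d : Fin n → ℝ := fun i => Real.sqrt (∫ z, (z i) ^ 2 ∂μ) with hd
  set s : Fin n → ℝ := fun i => ∫ y, |y i| ∂ν with hs
  have hs0 : ∀ i, 0 ≤ s i := fun i => integral_nonneg fun _ => abs_nonneg _
  have hd0 : ∀ i, 0 ≤ d i := fun i => Real.sqrt_nonneg _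
  have hdd : ∀ i, ∫ z, (z i) ^ 2 ∂μ = d i ^ 2 := fun i =>
    (Real.sq_sqrt (integral_nonneg fun _ => sq_nonneg _)).symm
  set I : Finset (Fin n) := Finset.univ.filter fun i => 0 < s i ∧ C * d i ≤ s i with hI
  obtain ⟨a, ha, hSa⟩ := hdual n μ ν hμ hνl _ hp hden r hr s I (fun _ => rfl) (fun i hi => by
    rw [hI, Finset.mem_filter] at hi
    refine ⟨hi.2.1, ?_⟩
    rw [hdd, ← mul_pow]
    exact pow_le_pow_left₀ (mul_nonneg hC.le (hd0 i)) hi.2.2 2)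
  have hS : ∑ i ∈ I, s i ^ r ≤ (D * W) ^ r := by
    have h1 : (∑ i ∈ I, s i ^ r) ^ (1 / r) ≤ D * W :=
      hSa.trans (mul_le_mul_of_nonneg_left (hWs a ha) hD.le)
    have h2 : 0 ≤ ∑ i ∈ I, s i ^ r := Finset.sum_nonneg fun i _ => Real.rpow_nonneg (hs0 i) _
    have h3 := Real.rpow_le_rpow (by positivity) h1 hr0.le
    rwa [← Real.rpow_mul h2, one_div_mul_cancel hr0.ne', Real.rpow_one] at h3
  set E := Real.exp (-t / (32 * C)) with hE
  have hE0 : 0 < E := Real.exp_pos _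
  -- the contribution of each coordinate under the conditional law
  have key : ∀ i, ∫ y, Set.indicator {y | t * d i ≤ y i} (fun y => |y i| ^ r) y ∂ν ≤
      (if i ∈ I then 3 * (16 * r) ^ r * s i ^ r else 0) +
        3 * (32 * C * t) ^ r * E * d i ^ r := by
    intro i
    have hpos : 0 ≤ 3 * (32 * C * t) ^ r * E * d i ^ r := by
      have := hd0 i
      positivity
    by_cases hi : i ∈ I
    · rw [if_pos hi]
      have hsi : 0 < s i := (Finset.mem_filter.1 hi).2.1
      refine (hνl.cut_heavy hr i hsi le_rfl _).trans ?_
      rw [show 16 * s i * r = 16 * r * s i by ring,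
        Real.mul_rpow (by positivity) (hs0 i), ← mul_assoc]
      linarith
    · rw [if_neg hi, zero_add]
      rcases (hd0 i).eq_or_lt with hdi | hdi
      · -- a coordinate with vanishing second moment is zero almost surely
        have h2 : Integrable (fun z : Fin n → ℝ => (z i) ^ 2) μ := by
          simpa using hμ.integrable_coord i (show (0 : ℝ) < 2 by norm_num)
        have h3 : (fun z : Fin n → ℝ => (z i) ^ 2) =ᵐ[μ] 0 :=
          (integral_eq_zero_iff_of_nonneg (fun _ => sq_nonneg _) h2).1 (by rw [hdd, ← hdi]; simp)
        have h4 : (fun z : Fin n → ℝ => (z i) ^ 2) =ᵐ[ν] 0 :=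
          (ProbabilityTheory.cond_absolutelyContinuous).ae_eq h3
        refine le_of_eq_of_le ?_ hpos
        refine integral_eq_zero_of_ae ?_
        filter_upwards [h4] with y hy
        have hy' : y i = 0 := by simpa using hy
        simp only [Set.indicator, hy', abs_zero, Real.zero_rpow hr0.ne', Pi.zero_apply, ite_self]
      · have hsi : s i ≤ C * d i := by
          by_contra hlt
          push Not at hlt
          exact hi (Finset.mem_filter.2 ⟨Finset.mem_univ _,
            (mul_pos hC hdi).trans hlt, hlt.le⟩)
        refine (hνl.cut_light hr i (mul_pos hC hdi) hsi _).trans ?_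
        rw [show -(t * d i) / (32 * (C * d i)) = -t / (32 * C) by field_simp, ← hE]
        have h5 : (32 * (C * d i) * r) ^ r ≤ (32 * C * t) ^ r * d i ^ r := by
          rw [← Real.mul_rpow (by positivity) hdi.le]
          refine Real.rpow_le_rpow (by positivity) ?_ hr0.le
          nlinarith [mul_le_mul_of_nonneg_left ht (show 0 ≤ 32 * (C * d i) by positivity)]
        calc 3 * (32 * (C * d i) * r) ^ r * E ≤ 3 * ((32 * C * t) ^ r * d i ^ r) * E := by gcongr
          _ = _ := by ring
  have hsd : 0 ≤ ∑ i, d i ^ r := Finset.sum_nonneg fun i _ => Real.rpow_nonneg (hd0 i) _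
  have hdt : ((∑ i, d i ^ r) ^ (1 / r) * t) ^ r = (∑ i, d i ^ r) * t ^ r := by
    rw [Real.mul_rpow (by positivity) ht0.le, ← Real.rpow_mul hsd, one_div_mul_cancel hr0.ne',
      Real.rpow_one]
  have h33 : (3 : ℝ) ≤ 3 ^ r := by
    simpa using Real.rpow_le_rpow_of_exponent_le (show (1 : ℝ) ≤ 3 by norm_num) hr
  have hA : 3 * (16 * r) ^ r * (D * W) ^ r ≤ (48 * D + 96 * C) ^ r * (r ^ r * W ^ r) := by
    calc 3 * (16 * r) ^ r * (D * W) ^ r ≤ 3 ^ r * (16 * r) ^ r * (D * W) ^ r := by gcongr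
      _ = (48 * D) ^ r * (r ^ r * W ^ r) := by
        rw [← Real.mul_rpow (by positivity) (by positivity),
          ← Real.mul_rpow (by positivity) (by positivity), ← Real.mul_rpow hr0.le hW,
          ← Real.mul_rpow (by positivity) (by positivity)]
        congr 1
        ring
      _ ≤ _ := by
        gcongr
        linarith
  have hB : 3 * (32 * C * t) ^ r ≤ (48 * D + 96 * C) ^ r * t ^ r := by
    calc 3 * (32 * C * t) ^ r ≤ 3 ^ r * (32 * C * t) ^ r := by gcongr
      _ = (96 * C) ^ r * t ^ r := by
        rw [← Real.mul_rpow (by positivity) (by positivity),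
          ← Real.mul_rpow (by positivity) (by positivity)]
        congr 1
        ring
      _ ≤ _ := by
        gcongr
        linarith
  have hsum : ∑ i, ∫ y, Set.indicator {y | t * d i ≤ y i} (fun y => |y i| ^ r) y ∂ν ≤
      3 * (16 * r) ^ r * (D * W) ^ r + 3 * (32 * C * t) ^ r * E * ∑ i, d i ^ r := by
    refine (Finset.sum_le_sum fun i _ => key i).trans ?_
    rw [Finset.sum_add_distrib, ← Finset.mul_sum, ← Finset.sum_filter,
      Finset.filter_mem_eq_inter, Finset.univ_inter, ← Finset.mul_sum]
    gcongr
  calc _ = q * ∑ i, ∫ y, Set.indicator {y | t * d i ≤ y i} (fun y => |y i| ^ r) y ∂ν := by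
        rw [Finset.mul_sum]
        exact Finset.sum_congr rfl fun i _ => integral_indicator_inter_cond hKm h0 _ _
    _ ≤ q * ((48 * D + 96 * C) ^ r * (r ^ r * W ^ r) +
        (48 * D + 96 * C) ^ r * t ^ r * E * ∑ i, d i ^ r) := by
        refine mul_le_mul_of_nonneg_left (hsum.trans (add_le_add hA ?_)) hq0.le
        gcongr
    _ = _ := by
        rw [hdt]
        ring

end final

/-- **Proposition 2.1 (i).** There are universal constants `C₆, C₇` such that for a log-concave
random vector `X` in `ℝⁿ`, `r ∈ [1,∞)`, a convex set `K` with `A = {X ∈ K}`,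
`0 < P(A) ≤ 1/e`, and every `t ≥ r`:
`∑ᵢ E[|Xᵢ|^r 1_{A ∩ {Xᵢ ≥ t dᵢ}}] ≤ C₆^r P(A) (r^r σ_{r,X}(-log P(A))^r + (dt)^r e^{-t/C₇})`. -/
theorem conditional_cut_moment_bound :
    ∃ C₆ C₇ : ℝ, 0 < C₆ ∧ 0 < C₇ ∧
      ∀ (n : ℕ) (Ω : Type) [MeasureSpace Ω], IsProbabilityMeasure (ℙ : Measure Ω) →
      ∀ X : Ω → Fin n → ℝ, Measurable X → IsLogConcave (Measure.map X ℙ) →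
      ∀ r : ℝ, 1 ≤ r →
      ∀ K : Set (Fin n → ℝ), Convex ℝ K →
      0 < ℙ (X ⁻¹' K) → (ℙ (X ⁻¹' K)).toReal ≤ (Real.exp 1)⁻¹ →
      ∀ t : ℝ, r ≤ t →
        (∑ i, ∫ ω, Set.indicator
            ((X ⁻¹' K) ∩ {ω' | t * Real.sqrt (∫ ω'', (X ω'' i) ^ 2) ≤ X ω' i})
            (fun ω' => |X ω' i| ^ r) ω) ≤
          C₆ ^ r * (ℙ (X ⁻¹' K)).toReal *
            (r ^ r * sigmaR r X (-Real.log (ℙ (X ⁻¹' K)).toReal) ^ r +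
              ((∑ i, Real.sqrt (∫ ω, (X ω i) ^ 2) ^ r) ^ (1 / r) * t) ^ r *
                Real.exp (-t / C₇)) := by
  obtain ⟨C₆, C₇, h₆, h₇, H⟩ := cut_measure
  refine ⟨C₆, C₇, h₆, h₇, ?_⟩
  intro n Ω _ hΩ X hX hlc r hr K hK hq0 hq1 t ht
  have hprob : IsProbabilityMeasure (Measure.map X ℙ) :=
    Measure.isProbabilityMeasure_map hX.aemeasurable
  have hKm : NullMeasurableSet K (Measure.map X ℙ) :=
    hlc.nullMeasurableSet_of_convex n _ _ K hK (by simp)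
  have hmK : (ℙ (X ⁻¹' K)).toReal = (Measure.map X ℙ).real K := by
    rw [measureReal_def, Measure.map_apply₀ hX.aemeasurable hKm]
  have hd : ∀ i, ∫ ω, (X ω i) ^ 2 = ∫ z, (z i) ^ 2 ∂(Measure.map X ℙ) := fun i =>
    (integral_map hX.aemeasurable
      (show Measurable fun z : Fin n → ℝ => (z i) ^ 2 by fun_prop).aestronglyMeasurable).symm
  have hq0' : 0 < (ℙ (X ⁻¹' K)).toReal := ENNReal.toReal_pos hq0.ne' (measure_ne_top _ _)
  have hlhs : ∀ (i : Fin n) (c : ℝ), ∫ ω, Set.indicator ((X ⁻¹' K) ∩ {ω' | c ≤ X ω' i})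
      (fun ω' => |X ω' i| ^ r) ω =
      ∫ y, Set.indicator (K ∩ {y | c ≤ y i}) (fun y => |y i| ^ r) y ∂(Measure.map X ℙ) := by
    intro i c
    have hS : NullMeasurableSet (K ∩ {y : Fin n → ℝ | c ≤ y i}) (Measure.map X ℙ) :=
      hKm.inter (measurableSet_le measurable_const (measurable_pi_apply i)).nullMeasurableSet
    rw [integral_map hX.aemeasurable (AEStronglyMeasurable.indicator₀
      (Measurable.aestronglyMeasurable (by fun_prop)) hS)]
    rfl
  have hp : 1 ≤ -Real.log (ℙ (X ⁻¹' K)).toReal := by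
    have := Real.log_le_log hq0' hq1
    rw [Real.log_inv, Real.log_exp] at this
    linarith
  simp only [hlhs, hd]
  rw [hmK] at hq0' hq1 hp ⊢
  exact H n _ hlc r hr K hK hq0' hq1 t ht _ (sigmaR_nonneg _ _ _)
    fun a ha => le_sigmaR hX hlc hr hp ha
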